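/- arXiv:2604.22267 — 5 statements merged into one kernel-verified Lean document; each statement's English description precedes it below -/
import Mathlib

section
/- Let q be a real number with 0 < q < 1. Then ∑_{n∈ℤ} q^{5n}/(1 + q^{10n+1}) = f(q⁴, q⁶)·((q^{10}; q^{10})∞)³ / (φ(−q⁵)·f(q, q⁹)), where both φ(−q⁵) and f(q, q⁹) are nonzero for 0 < q < 1. -/
/-- Ramanujan's theta function `f(a,b) = ∑_{n ∈ ℤ} a^(n(n+1)/2) b^(n(n-1)/2)`. -/
noncomputable def ramTheta (a b : ℂ) : ℂ :=
  ∑' n : ℤ, a ^ ((n * (n + 1)) / 2).toNat * b ^ ((n * (n - 1)) / 2).toNat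

/-- `φ(q) = f(q,q)`. -/
noncomputable def phi (q : ℂ) : ℂ := ramTheta q q

/-- `ψ(q) = f(q,q³)`. -/
noncomputable def psi (q : ℂ) : ℂ := ramTheta q (q ^ 3)

/-- `(a;q)_∞ = ∏_{k=0}^∞ (1 - a q^k)`. -/
noncomputable def qPochInf (a q : ℂ) : ℂ := ∏' k : ℕ, (1 - a * q ^ k)

open Filter Topology

/-- Coefficient `(-1)^n x^(n(n-1))`. -/
noncomputable def tt (x : ℝ) (n : ℤ) : ℝ := (-1) ^ n * x ^ (n * (n - 1))

/-- Tail sums. -/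
noncomputable def ee (x : ℝ) (n : ℕ) : ℝ := ∑' i : ℕ, (-1) ^ (n + i) * x ^ ((n + i) * (n + i + 1))

/-- Coefficients of the quotient `θ(b)/(1-b)`. -/
noncomputable def cc (x : ℝ) (k : ℤ) : ℝ := ee x k.natAbs

/-- Theta series. -/
noncomputable def th (x b : ℝ) : ℝ := ∑' n : ℤ, tt x n * b ^ n

/-- Quotient series. -/
noncomputable def CC (x b : ℝ) : ℝ := ∑' n : ℤ, cc x n * b ^ n

lemma summable_sq_nat {x r : ℝ} (hx0 : 0 < x) (hx1 : x < 1) (hr : 0 < r) :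
    Summable fun n : ℕ => x ^ (n * n) * r ^ n := by
  apply summable_of_ratio_test_tendsto_lt_one (l := 0) (by norm_num)
  · exact Eventually.of_forall fun n => by positivity
  · have h : ∀ n : ℕ, ‖x ^ ((n + 1) * (n + 1)) * r ^ (n + 1)‖ / ‖x ^ (n * n) * r ^ n‖
        = (x * r) * (x ^ 2) ^ n := by
      intro n
      rw [Real.norm_of_nonneg (by positivity), Real.norm_of_nonneg (by positivity)]
      rw [div_eq_iff (by positivity)]
      ring
    simp_rw [h]
    have := (tendsto_pow_atTop_nhds_zero_of_lt_one (r := x ^ 2) (by positivity)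
      (by nlinarith)).const_mul (x * r)
    simpa using this

lemma summable_sq {x r : ℝ} (hx0 : 0 < x) (hx1 : x < 1) (hr : 0 < r) :
    Summable fun n : ℤ => x ^ (n * n) * r ^ n := by
  apply Summable.of_nat_of_neg
  · have := summable_sq_nat hx0 hx1 hr
    refine this.congr fun n => ?_
    rw [← Nat.cast_mul, zpow_natCast, zpow_natCast]
  · have := summable_sq_nat hx0 hx1 (inv_pos.mpr hr)
    refine this.congr fun n => ?_
    rw [neg_mul_neg, ← Nat.cast_mul, zpow_natCast, zpow_neg, zpow_natCast, inv_pow]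

lemma tt_abs {x : ℝ} (hx0 : 0 < x) (n : ℤ) : |tt x n| = x ^ (n * n) * (x⁻¹) ^ n := by
  rw [tt, abs_mul, abs_neg_one_zpow, one_mul, abs_of_pos (by positivity), inv_zpow', 
    ← zpow_add₀ hx0.ne']
  congr 1; ring

lemma summable_tt {x b : ℝ} (hx0 : 0 < x) (hx1 : x < 1) (hb : b ≠ 0) :
    Summable fun n : ℤ => ‖tt x n * b ^ n‖ := by
  have := summable_sq hx0 hx1 (r := x⁻¹ * |b|) (by positivity)
  refine this.congr fun n => ?_
  rw [Real.norm_eq_abs, abs_mul, tt_abs hx0, abs_zpow, mul_zpow, mul_assoc]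

lemma ee_bound {x : ℝ} (hx0 : 0 < x) (hx1 : x < 1) (n i : ℕ) :
    ‖(-1 : ℝ) ^ (n + i) * x ^ ((n + i) * (n + i + 1))‖ ≤ x ^ (n * (n + 1)) * x ^ i := by
  rw [norm_mul, norm_pow, norm_neg, norm_one, one_pow, one_mul, Real.norm_of_nonneg (by positivity),
    ← pow_add]
  apply pow_le_pow_of_le_one hx0.le hx1.le
  nlinarith

lemma ee_summable {x : ℝ} (hx0 : 0 < x) (hx1 : x < 1) (n : ℕ) :
    Summable fun i : ℕ => (-1 : ℝ) ^ (n + i) * x ^ ((n + i) * (n + i + 1)) :=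
  Summable.of_norm_bounded ((summable_geometric_of_lt_one hx0.le hx1).mul_left _)
    (ee_bound hx0 hx1 n)

lemma ee_le {x : ℝ} (hx0 : 0 < x) (hx1 : x < 1) (n : ℕ) :
    |ee x n| ≤ (1 - x)⁻¹ * x ^ (n * (n + 1)) := by
  have := tsum_of_norm_bounded (((hasSum_geometric_of_lt_one hx0.le hx1).mul_left
    (x ^ (n * (n + 1))))) (ee_bound hx0 hx1 n)
  rw [mul_comm]
  exact this

lemma ee_succ {x : ℝ} (hx0 : 0 < x) (hx1 : x < 1) (n : ℕ) :
    ee x n = (-1) ^ n * x ^ (n * (n + 1)) + ee x (n + 1) := by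
  rw [ee, (ee_summable hx0 hx1 n).tsum_eq_zero_add, ee]
  congr 1
  refine tsum_congr fun i => ?_
  rw [show n + (i + 1) = n + 1 + i by ring]

lemma cc_le {x : ℝ} (hx0 : 0 < x) (hx1 : x < 1) (k : ℤ) :
    |cc x k| ≤ (1 - x)⁻¹ * x ^ (k * k + |k|) := by
  have := ee_le hx0 hx1 k.natAbs
  rw [cc]
  refine this.trans (le_of_eq ?_)
  congr 1
  rw [← zpow_natCast]
  congr 1
  push_cast
  rw [mul_add, ← pow_two, sq_abs]; ring

lemma cc_sub {x : ℝ} (hx0 : 0 < x) (hx1 : x < 1) (k : ℤ) :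
    cc x k - cc x (k - 1) = tt x k := by
  rcases le_or_gt k 0 with h | h
  · obtain ⟨j, rfl⟩ : ∃ j : ℕ, k = -(j : ℤ) := ⟨k.natAbs, by omega⟩
    rw [cc, cc, show (-(j : ℤ)).natAbs = j by omega, show (-(j : ℤ) - 1).natAbs = j + 1 by omega,
      ee_succ hx0 hx1 j, tt, zpow_neg, zpow_natCast, ← inv_pow,
      show -(j : ℤ) * (-j - 1) = ((j * (j + 1) : ℕ) : ℤ) by push_cast; ring, zpow_natCast]
    norm_num
  · obtain ⟨j, rfl⟩ : ∃ j : ℕ, k = (j : ℤ) + 1 := ⟨(k - 1).natAbs, by omega⟩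
    rw [cc, cc, show ((j : ℤ) + 1).natAbs = j + 1 by omega,
      show ((j : ℤ) + 1 - 1).natAbs = j by omega,
      ee_succ hx0 hx1 j, tt, 
      show ((j : ℤ) + 1) * (j + 1 - 1) = ((j * (j + 1) : ℕ) : ℤ) by push_cast; ring, zpow_natCast,
      zpow_add_one₀ (by norm_num), zpow_natCast]
    ring

lemma summable_cc {x b : ℝ} (hx0 : 0 < x) (hx1 : x < 1) (hb : b ≠ 0) :
    Summable fun n : ℤ => cc x n * b ^ n := by
  have := (summable_sq hx0 hx1 (r := |b|) (by positivity)).mul_left (1 - x)⁻¹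
  refine Summable.of_norm_bounded this fun n => ?_
  have h1 : 0 < 1 - x := by linarith
  rw [norm_mul, Real.norm_eq_abs, norm_zpow, Real.norm_eq_abs, ← mul_assoc]
  refine mul_le_mul_of_nonneg_right ?_ (by positivity)
  refine (cc_le hx0 hx1 n).trans ?_
  refine mul_le_mul_of_nonneg_left ?_ (by positivity)
  apply zpow_le_zpow_right_of_le_one₀ hx0 hx1.le
  have := abs_nonneg n
  linarith

lemma th_eq {x b : ℝ} (hx0 : 0 < x) (hx1 : x < 1) (hb : b ≠ 0) :
    th x b = (1 - b) * CC x b := by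
  have h1 := summable_cc hx0 hx1 hb
  have h2 : Summable fun n : ℤ => cc x (n - 1) * b ^ n := by
    have h3 := ((Equiv.subRight (1 : ℤ)).summable_iff.mpr h1).mul_left b
    refine h3.congr fun n => ?_
    simp only [Function.comp, Equiv.subRight_apply]
    rw [zpow_sub_one₀ hb]; field_simp
  have h4 : ∑' n : ℤ, cc x (n - 1) * b ^ n = b * CC x b := by
    rw [CC, ← (Equiv.subRight (1 : ℤ)).tsum_eq (fun n : ℤ => cc x n * b ^ n), ← tsum_mul_left]
    refine tsum_congr fun n => ?_
    simp only [Equiv.subRight_apply]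
    rw [zpow_sub_one₀ hb]; field_simp
  rw [th, sub_mul, one_mul, ← h4, CC, ← h1.tsum_sub h2]
  refine tsum_congr fun n => ?_
  rw [← cc_sub hx0 hx1]; ring

lemma th_shift {x a : ℝ} (hx0 : 0 < x) (ha : a ≠ 0) (n : ℤ) :
    th x a = tt x n * a ^ n * th x (a * x ^ (2 * n)) := by
  rw [th, ← (Equiv.addRight n).tsum_eq, th, ← tsum_mul_left]
  refine tsum_congr fun m => ?_
  simp only [Equiv.coe_addRight, tt]
  rw [mul_zpow, ← zpow_mul, zpow_add₀ ha, zpow_add₀ (by norm_num : (-1 : ℝ) ≠ 0),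
    show (m + n) * (m + n - 1) = m * (m - 1) + n * (n - 1) + 2 * n * m by ring,
    zpow_add₀ hx0.ne', zpow_add₀ hx0.ne']
  ring

/-- The constant `B₀`. -/
noncomputable def BB (x : ℝ) : ℝ := ∑' k : ℤ, (-1) ^ k * x ^ (-(k * k)) * cc x k

lemma summable_BB {x : ℝ} (hx0 : 0 < x) (hx1 : x < 1) :
    Summable fun k : ℤ => ‖(-1) ^ k * x ^ (-(k * k)) * cc x k‖ := by
  have hs : Summable fun k : ℤ => x ^ |k| := by
    apply Summable.of_nat_of_neg
    · refine (summable_geometric_of_lt_one hx0.le hx1).congr fun n => ?_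
      simp
    · refine (summable_geometric_of_lt_one hx0.le hx1).congr fun n => ?_
      simp
  refine Summable.of_nonneg_of_le (fun _ => norm_nonneg _) (fun k => ?_) (hs.mul_left (1 - x)⁻¹)
  rw [norm_mul, norm_mul, Real.norm_eq_abs, abs_neg_one_zpow, one_mul,
    Real.norm_of_nonneg (by positivity), Real.norm_eq_abs]
  calc _ ≤ x ^ (-(k * k)) * ((1 - x)⁻¹ * x ^ (k * k + |k|)) := by
        gcongr; exact cc_le hx0 hx1 k
    _ = _ := by
        rw [zpow_add₀ hx0.ne', zpow_neg]
        have : x ^ (k * k) ≠ 0 := by positivity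
        field_simp

/-- Shear equivalence. -/
def shear : ℤ × ℤ ≃ ℤ × ℤ where
  toFun z := (z.1 + z.2, z.2)
  invFun z := (z.1 - z.2, z.2)
  left_inv z := by simp
  right_inv z := by simp

lemma main_double {x a : ℝ} (hx0 : 0 < x) (hx1 : x < 1) (ha : a ≠ 0) :
    ∑' n : ℤ, tt x n * (a * x) ^ n * CC x (a * x ^ (2 * n)) = th x (a * x) * BB x := by
  have hu := summable_tt hx0 hx1 (b := a * x) (by positivity)
  have hv := summable_BB hx0 hx1
  have hs := summable_mul_of_summable_norm hu hv
  rw [th, BB, tsum_mul_tsum_of_summable_norm hu hv, ← shear.tsum_eq]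
  refine Eq.trans ?_ ((shear.summable_iff).mpr hs).tsum_prod.symm
  refine tsum_congr fun n => ?_
  rw [CC, ← tsum_mul_left]
  refine tsum_congr fun k => ?_
  simp only [shear, Function.comp, Equiv.coe_fn_mk, tt]
  have h1 : (-1 : ℝ) ^ k * (-1) ^ k = 1 := by rw [← mul_zpow]; simp
  rw [mul_zpow, mul_zpow, mul_zpow, ← zpow_mul, zpow_add₀ ha,
    zpow_add₀ (by norm_num : (-1 : ℝ) ≠ 0)]
  have h2 : x ^ ((n + k) * (n + k - 1)) * x ^ (n + k) * x ^ (-(k * k))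
      = x ^ (n * (n - 1)) * x ^ n * x ^ (2 * n * k) := by
    rw [← zpow_add₀ hx0.ne', ← zpow_add₀ hx0.ne', ← zpow_add₀ hx0.ne', ← zpow_add₀ hx0.ne']
    congr 1; ring
  calc _ = (-1) ^ n * a ^ n * a ^ k * cc x k * (x ^ (n * (n - 1)) * x ^ n * x ^ (2 * n * k)) := by
        ring
    _ = (-1) ^ n * a ^ n * a ^ k * cc x k *
        (x ^ ((n + k) * (n + k - 1)) * x ^ (n + k) * x ^ (-(k * k))) * ((-1 : ℝ) ^ k * (-1) ^ k) := by
        rw [h2, h1, mul_one]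
    _ = _ := by ring

lemma CC_one {x : ℝ} (hx0 : 0 < x) (hx1 : x < 1) : CC x 1 = th x x * BB x := by
  have h := main_double hx0 hx1 (a := 1) one_ne_zero
  rw [one_mul] at h
  rw [← h, tsum_eq_single 0]
  · simp [tt]
  · intro n hn
    have h1 : th x 1 = 0 := by rw [th_eq hx0 hx1 one_ne_zero]; simp
    have h2 := th_shift hx0 (one_ne_zero (α := ℝ)) n
    rw [h1, th_eq hx0 hx1 (by positivity)] at h2
    have h3 : (1 : ℝ) - 1 * x ^ (2 * n) ≠ 0 := by
      rw [one_mul, sub_ne_zero]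
      intro h
      have := (zpow_eq_one_iff_right₀ hx0.le hx1.ne).mp h.symm
      omega
    have h4 : tt x n ≠ 0 := by rw [tt]; positivity
    have h5 : CC x (1 * x ^ (2 * n)) = 0 := by
      have h6 := h2.symm
      simp only [mul_eq_zero, h3, h4, false_or, one_zpow, one_ne_zero] at h6
      exact h6
    rw [h5, mul_zero]

lemma main_id {x a : ℝ} (hx0 : 0 < x) (hx1 : x < 1) (ha : a < 0) :
    th x a * ∑' n : ℤ, x ^ n / (1 - a * x ^ (2 * n)) = th x (a * x) * BB x := by
  rw [← main_double hx0 hx1 ha.ne, ← tsum_mul_left]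
  refine tsum_congr fun n => ?_
  have h1 : 0 < 1 - a * x ^ (2 * n) := by
    have : 0 < x ^ (2 * n) := by positivity
    nlinarith
  have ha' := ha.ne
  rw [th_shift hx0 ha.ne n, th_eq hx0 hx1 (b := a * x ^ (2 * n)) (by positivity), mul_zpow]
  field_simp

/-- Finite product `(p;p)_n` with `p = x^2`. -/
noncomputable def pp (x : ℝ) (n : ℕ) : ℝ := ∏ i ∈ Finset.range n, (1 - (x ^ 2) ^ (i + 1))

/-- Infinite product. -/
noncomputable def PP (x : ℝ) : ℝ := ∏' i : ℕ, (1 - (x ^ 2) ^ (i + 1))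

/-- Reciprocal of `(p;p)_k`, extended by zero. -/
noncomputable def gg (x : ℝ) (k : ℤ) : ℝ := if k < 0 then 0 else (pp x k.toNat)⁻¹

lemma fac_pos {x : ℝ} (hx0 : 0 < x) (hx1 : x < 1) (n : ℕ) : 0 < 1 - (x ^ 2) ^ (n + 1) := by
  have : (x ^ 2) ^ (n + 1) < 1 := pow_lt_one₀ (by positivity) (by nlinarith) (by omega)
  linarith

lemma pp_pos {x : ℝ} (hx0 : 0 < x) (hx1 : x < 1) (n : ℕ) : 0 < pp x n :=
  Finset.prod_pos fun i _ => fac_pos hx0 hx1 i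

lemma pp_succ (x : ℝ) (n : ℕ) : pp x (n + 1) = pp x n * (1 - (x ^ 2) ^ (n + 1)) :=
  Finset.prod_range_succ _ _

lemma summable_fac {x : ℝ} (hx0 : 0 < x) (hx1 : x < 1) :
    Summable fun i : ℕ => ‖-(x ^ 2) ^ (i + 1)‖ := by
  have h := (summable_geometric_of_lt_one (r := x ^ 2) (by positivity) (by nlinarith))
  refine ((summable_nat_add_iff 1).mpr h).congr fun n => ?_
  rw [norm_neg, Real.norm_of_nonneg (by positivity)]

lemma mult_fac {x : ℝ} (hx0 : 0 < x) (hx1 : x < 1) :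
    Multipliable fun i : ℕ => (1 - (x ^ 2) ^ (i + 1)) := by
  have := multipliable_one_add_of_summable (summable_fac hx0 hx1)
  simpa only [← sub_eq_add_neg] using this

lemma PP_ne {x : ℝ} (hx0 : 0 < x) (hx1 : x < 1) : PP x ≠ 0 := by
  have := tprod_one_add_ne_zero_of_summable (f := fun i : ℕ => -(x ^ 2) ^ (i + 1)) (fun i => by
    have := fac_pos hx0 hx1 i
    rw [← sub_eq_add_neg]; exact this.ne') (summable_fac hx0 hx1)
  rw [PP]
  simpa only [← sub_eq_add_neg] using this

lemma pp_tendsto {x : ℝ} (hx0 : 0 < x) (hx1 : x < 1) : Tendsto (pp x) atTop (𝓝 (PP x)) :=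
  (mult_fac hx0 hx1).hasProd.tendsto_prod_nat

lemma gg_bound {x : ℝ} (hx0 : 0 < x) (hx1 : x < 1) : ∃ K, 0 ≤ K ∧ ∀ k, |gg x k| ≤ K := by
  have h := (pp_tendsto hx0 hx1).inv₀ (PP_ne hx0 hx1)
  obtain ⟨K, hK⟩ := (Metric.isBounded_range_of_tendsto _ h).exists_norm_le
  have hK0 : 0 ≤ K := (norm_nonneg _).trans (hK _ ⟨0, rfl⟩)
  refine ⟨K, hK0, fun k => ?_⟩
  rw [gg]
  split_ifs
  · simpa using hK0
  · exact hK _ ⟨k.toNat, rfl⟩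

lemma gg_tendsto {x : ℝ} (hx0 : 0 < x) (hx1 : x < 1) (j : ℤ) :
    Tendsto (fun N : ℕ => gg x (N + j)) atTop (𝓝 (PP x)⁻¹) := by
  have h := (pp_tendsto hx0 hx1).inv₀ (PP_ne hx0 hx1)
  have h2 : Tendsto (fun N : ℕ => ((N : ℤ) + j).toNat) atTop atTop := by
    rw [tendsto_atTop]
    intro b
    filter_upwards [eventually_ge_atTop (b + j.natAbs)] with N hN
    omega
  refine (h.comp h2).congr' ?_
  filter_upwards [eventually_ge_atTop j.natAbs] with N hN
  rw [gg, if_neg (by omega)]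
  rfl

lemma gg_rec {x : ℝ} (hx0 : 0 < x) (hx1 : x < 1) (k : ℤ) :
    (1 - x ^ (2 * k)) * gg x k = gg x (k - 1) := by
  rcases lt_trichotomy k 0 with h | h | h
  · rw [gg, gg, if_pos h, if_pos (by omega), mul_zero]
  · subst h; simp [gg]
  · obtain ⟨j, rfl⟩ : ∃ j : ℕ, k = (j : ℤ) + 1 := ⟨(k - 1).natAbs, by omega⟩
    rw [gg, gg, if_neg (by omega), if_neg (by omega), show ((j : ℤ) + 1).toNat = j + 1 by omega,
      show ((j : ℤ) + 1 - 1).toNat = j by omega, pp_succ, 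
      show (2 : ℤ) * (j + 1) = ((2 * (j + 1) : ℕ) : ℤ) by push_cast; ring, zpow_natCast, pow_mul]
    have h1 := (pp_pos hx0 hx1 j).ne'
    have h2 := (fac_pos hx0 hx1 j).ne'
    field_simp

lemma abs_add_one_le (j : ℤ) : |(j : ℝ)| + 1 ≤ (2 : ℝ) ^ j + (2⁻¹ : ℝ) ^ j := by
  have key : ∀ n : ℕ, (n : ℝ) + 1 ≤ 2 ^ n := fun n => by
    have : n + 1 ≤ 2 ^ n := Nat.lt_two_pow_self
    exact_mod_cast this
  rcases le_total 0 j with h | h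
  · obtain ⟨n, rfl⟩ := Int.eq_ofNat_of_zero_le h
    have h2 : (0 : ℝ) < (2⁻¹) ^ n := by positivity
    have := key n
    simp only [Int.cast_natCast, Nat.abs_cast, zpow_natCast]
    linarith
  · obtain ⟨n, hn⟩ := Int.eq_ofNat_of_zero_le (Int.neg_nonneg.mpr h)
    obtain rfl : j = -(n : ℤ) := by omega
    have h2 : (0 : ℝ) < (2⁻¹) ^ n := by positivity
    have := key n
    simp only [Int.cast_neg, abs_neg, Int.cast_natCast, Nat.abs_cast, zpow_neg, zpow_natCast,
      inv_pow, inv_inv] at *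
    linarith

lemma summable_jt {x : ℝ} (hx0 : 0 < x) (hx1 : x < 1) :
    Summable fun j : ℤ => (|(j : ℝ)| + 1) * |tt x j| := by
  have h1 := summable_tt hx0 hx1 (b := 2) (by norm_num)
  have h2 := summable_tt hx0 hx1 (b := 2⁻¹) (by norm_num)
  refine Summable.of_nonneg_of_le (fun j => by positivity) (fun j => ?_) (h1.add h2)
  rw [norm_mul, norm_mul, Real.norm_eq_abs, norm_zpow, norm_zpow, ← mul_add, mul_comm]
  refine mul_le_mul_of_nonneg_left ?_ (abs_nonneg _)
  have := abs_add_one_le j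
  simpa using this

/-- Weighted finite theta sums. -/
noncomputable def WW (x : ℝ) (r : ℤ → ℝ) (n m : ℤ) : ℝ :=
  ∑' j : ℤ, r j * tt x j * (gg x (n + j) * gg x (m - j))

lemma WW_bound {x : ℝ} (hx0 : 0 < x) (hx1 : x < 1) : ∃ K, ∀ (r : ℤ → ℝ),
    (∀ j, |r j| ≤ |(j : ℝ)| + 1) → ∀ n m j : ℤ,
      ‖r j * tt x j * (gg x (n + j) * gg x (m - j))‖ ≤ (|(j : ℝ)| + 1) * |tt x j| * K := by
  obtain ⟨K, hK0, hK⟩ := gg_bound hx0 hx1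
  refine ⟨K * K, fun r hr n m j => ?_⟩
  rw [Real.norm_eq_abs, abs_mul, abs_mul, abs_mul]
  have := hr j
  gcongr
  · exact hK _
  · exact hK _

lemma WW_summable {x : ℝ} (hx0 : 0 < x) (hx1 : x < 1) {r : ℤ → ℝ}
    (hr : ∀ j, |r j| ≤ |(j : ℝ)| + 1) (n m : ℤ) :
    Summable fun j : ℤ => r j * tt x j * (gg x (n + j) * gg x (m - j)) := by
  obtain ⟨K, hK⟩ := WW_bound hx0 hx1
  exact Summable.of_norm_bounded ((summable_jt hx0 hx1).mul_right K) (hK r hr n m)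

lemma WW_rec1 {x : ℝ} (hx0 : 0 < x) (hx1 : x < 1) {r : ℤ → ℝ}
    (hr : ∀ j, |r j| ≤ |(j : ℝ)| + 1) (n m : ℤ) :
    (1 - x ^ (2 * (n + m))) * WW x r n m
      = WW x r (n - 1) m - x ^ (2 * n) * WW x (fun j => r (j - 1)) (n - 1) m := by
  have h1 := (WW_summable hx0 hx1 hr n m).mul_left (1 - x ^ (2 * (n + m)))
  have h2 := WW_summable hx0 hx1 hr (n - 1) m
  rw [eq_sub_iff_add_eq, ← eq_sub_iff_add_eq', ← neg_inj, neg_sub]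
  rw [WW, WW, WW, ← tsum_mul_left, ← tsum_mul_left, ← h1.tsum_sub h2, ← tsum_neg,
    ← (Equiv.addRight (1 : ℤ)).tsum_eq (fun j : ℤ => -(x ^ (2 * n) * (r (j - 1) * tt x j * (gg x (n - 1 + j) * gg x (m - j)))))]
  refine tsum_congr fun j => ?_
  simp only [Equiv.coe_addRight, add_sub_cancel_right]
  have e1 := gg_rec hx0 hx1 (n + j)
  have e2 := gg_rec hx0 hx1 (m - j)
  rw [show n - 1 + j = n + j - 1 by ring, show m - (j + 1) = m - j - 1 by ring,
    show n - 1 + (j + 1) = n + j by ring, ← e1, ← e2]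
  have e3 : tt x (j + 1) = - (tt x j * x ^ (2 * j)) := by
    rw [tt, tt, zpow_add_one₀ (by norm_num), 
      show (j + 1) * (j + 1 - 1) = j * (j - 1) + 2 * j by ring, zpow_add₀ hx0.ne']
    ring
  have e4 : x ^ (2 * (n + m)) = x ^ (2 * (n + j)) * x ^ (2 * (m - j)) := by
    rw [← zpow_add₀ hx0.ne']; congr 1; ring
  have e5 : x ^ (2 * (n + j)) = x ^ (2 * n) * x ^ (2 * j) := by
    rw [← zpow_add₀ hx0.ne']; congr 1; ring
  rw [e3, e4, e5]
  ring

lemma WW_rec2 {x : ℝ} (hx0 : 0 < x) (hx1 : x < 1) {r : ℤ → ℝ}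
    (hr : ∀ j, |r j| ≤ |(j : ℝ)| + 1) (n m : ℤ) :
    (1 - x ^ (2 * (n + (m + 1)))) * WW x r n (m + 1)
      = WW x r n m - x ^ (2 * m) * WW x (fun j => r (j + 1)) n m := by
  have h1 := (WW_summable hx0 hx1 hr n (m + 1)).mul_left (1 - x ^ (2 * (n + (m + 1))))
  have h2 := WW_summable hx0 hx1 hr n m
  rw [eq_sub_iff_add_eq, ← eq_sub_iff_add_eq', ← neg_inj, neg_sub]
  rw [WW, WW, WW, ← tsum_mul_left, ← tsum_mul_left, ← h1.tsum_sub h2, ← tsum_neg,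
    ← (Equiv.subRight (1 : ℤ)).tsum_eq (fun j : ℤ => -(x ^ (2 * m) * (r (j + 1) * tt x j * (gg x (n + j) * gg x (m - j)))))]
  refine tsum_congr fun j => ?_
  simp only [Equiv.subRight_apply, sub_add_cancel]
  have e1 := gg_rec hx0 hx1 (n + j)
  have e2 := gg_rec hx0 hx1 (m + 1 - j)
  rw [show m - j = m + 1 - j - 1 by ring, show m - (j - 1) = m + 1 - j by ring,
    show n + (j - 1) = n + j - 1 by ring, ← e1, ← e2]
  have e3 : tt x j = - (tt x (j - 1) * x ^ (2 * (j - 1))) := by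
    rw [tt, tt, zpow_sub_one₀ (by norm_num), 
      show j * (j - 1) = (j - 1) * (j - 1 - 1) + 2 * (j - 1) by ring, zpow_add₀ hx0.ne']
    norm_num
    ring
  have e4 : x ^ (2 * (n + (m + 1))) = x ^ (2 * (n + j)) * x ^ (2 * (m + 1 - j)) := by
    rw [← zpow_add₀ hx0.ne']; congr 1; ring
  have e5 : x ^ (2 * m) = x ^ (2 * (m + 1 - j)) * x ^ (2 * (j - 1)) := by
    rw [← zpow_add₀ hx0.ne']; congr 1; ring
  rw [e3, e4, e5]
  ring

/-- Unweighted. -/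
noncomputable def MM (x : ℝ) (n m : ℤ) : ℝ := WW x (fun _ => 1) n m
/-- Weighted by `j`. -/
noncomputable def DD (x : ℝ) (n m : ℤ) : ℝ := WW x (fun j => (j : ℝ)) n m

lemma hr1 (j : ℤ) : |(1 : ℝ)| ≤ |(j : ℝ)| + 1 := by
  have := abs_nonneg (j : ℝ); simp
lemma hr2 (j : ℤ) : |(j : ℝ)| ≤ |(j : ℝ)| + 1 := by linarith

lemma WW_add {x : ℝ} (hx0 : 0 < x) (hx1 : x < 1) (n m : ℤ) :
    WW x (fun j => ((j + 1 : ℤ) : ℝ)) n m = DD x n m + MM x n m := by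
  rw [DD, MM, WW, WW, WW, ← (WW_summable hx0 hx1 hr2 n m).tsum_add (WW_summable hx0 hx1 hr1 n m)]
  refine tsum_congr fun j => ?_
  push_cast; ring

lemma WW_sub {x : ℝ} (hx0 : 0 < x) (hx1 : x < 1) (n m : ℤ) :
    WW x (fun j => ((j - 1 : ℤ) : ℝ)) n m = DD x n m - MM x n m := by
  rw [DD, MM, WW, WW, WW, ← (WW_summable hx0 hx1 hr2 n m).tsum_sub (WW_summable hx0 hx1 hr1 n m)]
  refine tsum_congr fun j => ?_
  push_cast; ring

lemma zf {x : ℝ} (hx0 : 0 < x) (hx1 : x < 1) (k : ℤ) (hk : 0 < k) : (1 - x ^ (2 * k)) ≠ 0 := by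
  rw [sub_ne_zero]
  intro h
  have := (zpow_eq_one_iff_right₀ hx0.le hx1.ne).mp h.symm
  omega

lemma MM_zero (x : ℝ) : MM x 0 0 = 1 := by
  rw [MM, WW, tsum_eq_single 0]
  · simp [tt, gg, pp]
  · intro j hj
    rcases lt_or_gt_of_ne hj with h | h
    · rw [show gg x (0 + j) = 0 by rw [gg, if_pos (by omega)]]; ring
    · rw [show gg x (0 - j) = 0 by rw [gg, if_pos (by omega)]]; ring

lemma MM_rec1 {x : ℝ} (hx0 : 0 < x) (hx1 : x < 1) (n m : ℤ) :
    (1 - x ^ (2 * (n + m))) * MM x n m = (1 - x ^ (2 * n)) * MM x (n - 1) m := by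
  have := WW_rec1 hx0 hx1 hr1 n m
  rw [MM, MM, this]; ring

lemma MM_rec2 {x : ℝ} (hx0 : 0 < x) (hx1 : x < 1) (n m : ℤ) :
    (1 - x ^ (2 * (n + (m + 1)))) * MM x n (m + 1) = (1 - x ^ (2 * m)) * MM x n m := by
  have := WW_rec2 hx0 hx1 hr1 n m
  rw [MM, MM, this]; ring

lemma DD_rec1 {x : ℝ} (hx0 : 0 < x) (hx1 : x < 1) (n m : ℤ) :
    (1 - x ^ (2 * (n + m))) * DD x n m
      = (1 - x ^ (2 * n)) * DD x (n - 1) m + x ^ (2 * n) * MM x (n - 1) m := by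
  have := WW_rec1 hx0 hx1 hr2 n m
  rw [WW_sub hx0 hx1] at this
  rw [DD, this, ← DD]; ring

lemma DD_rec2 {x : ℝ} (hx0 : 0 < x) (hx1 : x < 1) (n m : ℤ) :
    (1 - x ^ (2 * (n + (m + 1)))) * DD x n (m + 1)
      = (1 - x ^ (2 * m)) * DD x n m - x ^ (2 * m) * MM x n m := by
  have := WW_rec2 hx0 hx1 hr2 n m
  rw [WW_add hx0 hx1] at this
  rw [DD, this, ← DD]; ring

lemma MM_zero_succ {x : ℝ} (hx0 : 0 < x) (hx1 : x < 1) (m : ℕ) : MM x 0 ((m : ℤ) + 1) = 0 := by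
  induction m with
  | zero =>
    have h := MM_rec2 hx0 hx1 0 0
    have hz := zf hx0 hx1 (0 + (0 + 1)) (by norm_num)
    simpa [hz, hx0.ne'] using (show (1 - x ^ (2 * ((0 : ℤ) + (0 + 1)))) * MM x 0 (0 + 1) = 0 by
      rw [h]; simp) |> fun h => (mul_eq_zero.mp h).resolve_left hz
  | succ m ih =>
    have h := MM_rec2 hx0 hx1 0 ((m : ℤ) + 1)
    rw [ih, mul_zero] at h
    push_cast
    exact (mul_eq_zero.mp h).resolve_left (zf hx0 hx1 _ (by omega))

lemma MM_succ {x : ℝ} (hx0 : 0 < x) (hx1 : x < 1) (n m : ℕ) : MM x n ((m : ℤ) + 1) = 0 := by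
  induction n with
  | zero => exact MM_zero_succ hx0 hx1 m
  | succ n ih =>
    have h := MM_rec1 hx0 hx1 ((n : ℤ) + 1) ((m : ℤ) + 1)
    rw [add_sub_cancel_right, ih, mul_zero] at h
    push_cast
    exact (mul_eq_zero.mp h).resolve_left (zf hx0 hx1 _ (by omega))

lemma zpow_fac (x : ℝ) (n : ℕ) : x ^ (2 * ((n : ℤ) + 1)) = (x ^ 2) ^ (n + 1) := by
  rw [show (2 : ℤ) * (n + 1) = ((2 * (n + 1) : ℕ) : ℤ) by push_cast; ring, zpow_natCast, pow_mul]

lemma DD_zero {x : ℝ} (hx0 : 0 < x) (hx1 : x < 1) (m : ℕ) :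
    DD x 0 ((m : ℤ) + 1) * pp x (m + 1) = - pp x m := by
  induction m with
  | zero =>
    have h := DD_rec2 hx0 hx1 0 0
    rw [MM_zero] at h
    have e := zpow_fac x 0
    simp only [Nat.cast_zero, zero_add] at e h
    rw [e] at h
    simp only [pp_succ, Nat.cast_zero, zero_add]
    simp [pp] at h ⊢
    linarith
  | succ m ih =>
    have h := DD_rec2 hx0 hx1 0 ((m : ℤ) + 1)
    rw [MM_zero_succ hx0 hx1, zero_add, show (m : ℤ) + 1 + 1 = ((m + 1 : ℕ) : ℤ) + 1 by push_cast; rfl,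
      zpow_fac, zpow_fac] at h
    rw [pp_succ x (m + 1)]
    have e := pp_succ x m
    linear_combination pp x (m + 1) * h + (1 - (x ^ 2) ^ (m + 1)) * ih + e

lemma DD_eq {x : ℝ} (hx0 : 0 < x) (hx1 : x < 1) (n m : ℕ) :
    DD x n ((m : ℤ) + 1) * pp x (n + m + 1) = - (pp x n * pp x m) := by
  induction n with
  | zero => 
    have := DD_zero hx0 hx1 m
    simpa [pp] using this
  | succ n ih =>
    have h := DD_rec1 hx0 hx1 ((n : ℤ) + 1) ((m : ℤ) + 1)
    rw [add_sub_cancel_right, MM_succ hx0 hx1, 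
      show (n : ℤ) + 1 + (m + 1) = ((n + m + 1 : ℕ) : ℤ) + 1 by push_cast; ring,
      zpow_fac, zpow_fac] at h
    rw [show n + 1 + m + 1 = (n + m + 1) + 1 by ring, pp_succ x (n + m + 1), pp_succ x n]
    push_cast
    linear_combination pp x (n + m + 1) * h + (1 - (x ^ 2) ^ (n + 1)) * ih

lemma sum_jt {x : ℝ} (hx0 : 0 < x) (hx1 : x < 1) :
    ∑' j : ℤ, (j : ℝ) * tt x j = - PP x ^ 3 := by
  have hP := PP_ne hx0 hx1
  have ht := pp_tendsto hx0 hx1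
  have h1 : Tendsto (fun N : ℕ => DD x N ((N : ℤ) + 1)) atTop (𝓝 (-(PP x * PP x) / PP x)) := by
    have h2 : Tendsto (fun N : ℕ => pp x (N + N + 1)) atTop (𝓝 (PP x)) :=
      ht.comp (tendsto_atTop_mono (fun N => by simp only [id]; omega) tendsto_id)
    refine ((ht.mul ht).neg.div h2 hP).congr fun N => ?_
    rw [Pi.div_apply, ← DD_eq hx0 hx1]
    exact mul_div_cancel_right₀ _ (pp_pos hx0 hx1 _).ne'
  have h2 : Tendsto (fun N : ℕ => DD x N ((N : ℤ) + 1)) atTop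
      (𝓝 (∑' j : ℤ, (j : ℝ) * tt x j * ((PP x)⁻¹ * (PP x)⁻¹))) := by
    obtain ⟨K, hK⟩ := WW_bound hx0 hx1
    refine tendsto_tsum_of_dominated_convergence ((summable_jt hx0 hx1).mul_right K) ?_
      (Eventually.of_forall fun N j => hK _ hr2 _ _ j)
    intro j
    refine Tendsto.const_mul _ ((gg_tendsto hx0 hx1 j).mul ?_)
    refine (gg_tendsto hx0 hx1 (1 - j)).congr fun N => ?_
    congr 1; ring
  have h3 := tendsto_nhds_unique h2 h1
  rw [tsum_mul_right] at h3
  field_simp at h3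
  linarith

lemma CC_one_eq {x : ℝ} (hx0 : 0 < x) (hx1 : x < 1) : CC x 1 = PP x ^ 3 := by
  have hs := summable_cc hx0 hx1 (one_ne_zero (α := ℝ))
  simp only [one_zpow, mul_one] at hs
  have hj : Summable fun j : ℤ => (j : ℝ) * cc x j := by
    have h1 := (summable_sq hx0 hx1 (r := 2) (by norm_num)).add
      (summable_sq hx0 hx1 (r := 2⁻¹) (by norm_num))
    refine Summable.of_norm_bounded (h1.mul_left (1 - x)⁻¹) fun j => ?_
    have hx : 0 < 1 - x := by linarith
    have e1 := abs_add_one_le j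
    have e2 : x ^ (j * j + |j|) ≤ x ^ (j * j) := by
      apply zpow_le_zpow_right_of_le_one₀ hx0 hx1.le
      have := abs_nonneg j
      linarith
    calc ‖(j : ℝ) * cc x j‖ = |(j : ℝ)| * |cc x j| := by rw [Real.norm_eq_abs, abs_mul]
      _ ≤ ((2 : ℝ) ^ j + (2⁻¹ : ℝ) ^ j) * ((1 - x)⁻¹ * x ^ (j * j)) := by
          apply mul_le_mul
          · linarith
          · exact (cc_le hx0 hx1 j).trans (mul_le_mul_of_nonneg_left e2 (by positivity))
          · positivity
          · positivity
      _ = _ := by ring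
  have hk : Summable fun j : ℤ => ((j : ℝ) + 1) * cc x j :=
    (hj.add hs).congr fun j => by ring
  have e1 : ∑' j : ℤ, (j : ℝ) * cc x (j - 1) = ∑' j : ℤ, ((j : ℝ) + 1) * cc x j := by
    rw [← (Equiv.addRight (1 : ℤ)).tsum_eq]
    refine tsum_congr fun j => ?_
    simp
  have hk' : Summable fun j : ℤ => (j : ℝ) * cc x (j - 1) := by
    refine ((Equiv.subRight (1 : ℤ)).summable_iff.mpr hk).congr fun j => ?_
    simp
  have h := sum_jt hx0 hx1
  have h5 : ∑' j : ℤ, (j : ℝ) * tt x j = - CC x 1 := by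
    have : ∀ j : ℤ, (j : ℝ) * tt x j = j * cc x j - j * cc x (j - 1) := fun j => by
      rw [← cc_sub hx0 hx1]; ring
    simp_rw [this]
    rw [hj.tsum_sub hk', e1, ← hj.tsum_sub hk, CC, ← tsum_neg]
    refine tsum_congr fun j => ?_
    simp; ring
  linarith

lemma tri_nat (n : ℤ) : 2 * (((n * (n + 1)) / 2).toNat : ℤ) = n * (n + 1) ∧
    2 * (((n * (n - 1)) / 2).toNat : ℤ) = n * (n - 1) := by
  have h1 : 0 ≤ n * (n + 1) := by
    rcases le_or_gt 0 n with h | h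
    · positivity
    · nlinarith
  have h2 : 0 ≤ n * (n - 1) := by
    rcases le_or_gt n 0 with h | h
    · nlinarith
    · exact mul_nonneg h.le (by omega)
  have h3 : 2 ∣ n * (n + 1) := (Int.even_mul_succ_self n).two_dvd
  have h4 : 2 ∣ n * (n - 1) := (Int.even_mul_pred_self n).two_dvd
  omega

lemma ram_term {q : ℝ} (hq0 : 0 < q) (c d : ℕ) (n e : ℤ)
    (he : 2 * e = c * (n * (n + 1)) + d * (n * (n - 1))) :
    ((q : ℂ) ^ c) ^ ((n * (n + 1)) / 2).toNat * ((q : ℂ) ^ d) ^ ((n * (n - 1)) / 2).toNat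
      = ((q ^ e : ℝ) : ℂ) := by
  obtain ⟨h1, h2⟩ := tri_nat n
  rw [← pow_mul, ← pow_mul, ← pow_add]
  rw [show e = ((c * ((n * (n + 1)) / 2).toNat + d * ((n * (n - 1)) / 2).toNat : ℕ) : ℤ) by
    push_cast
    rw [← h1, ← h2] at he
    linarith, zpow_natCast]
  push_cast; rfl

lemma neg_one_sq_zpow (n : ℤ) : (-1 : ℝ) ^ (n * n) = (-1) ^ n := by
  rw [show n * n = n + n * (n - 1) by ring, zpow_add₀ (by norm_num),
    (Int.even_mul_pred_self n).neg_one_zpow, mul_one]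

lemma phi_eq {q : ℝ} (hq0 : 0 < q) : phi (-(q : ℂ) ^ 5) = ((th (q ^ 5) (q ^ 5) : ℝ) : ℂ) := by
  rw [phi, ramTheta, th, Complex.ofReal_tsum]
  refine tsum_congr fun n => ?_
  obtain ⟨h1, h2⟩ := tri_nat n
  have hq5 : q ^ 5 ≠ 0 := by positivity
  rw [← pow_add, tt, mul_assoc, ← zpow_add₀ hq5, show n * (n - 1) + n = n * n by ring,
    ← neg_one_sq_zpow, ← mul_zpow,
    show n * n = ((((n * (n + 1)) / 2).toNat + ((n * (n - 1)) / 2).toNat : ℕ) : ℤ) by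
      push_cast; linarith, zpow_natCast]
  push_cast
  ring

lemma f19_eq {q : ℝ} (hq0 : 0 < q) :
    ramTheta (q : ℂ) ((q : ℂ) ^ 9) = ((th (q ^ 5) (-q) : ℝ) : ℂ) ∧ 0 < th (q ^ 5) (-q) ∨ 1 ≤ q := by
  rcases le_or_gt 1 q with h | hq1
  · exact Or.inr h
  left
  have hx0 : 0 < q ^ 5 := by positivity
  have hx1 : q ^ 5 < 1 := pow_lt_one₀ hq0.le hq1 (by norm_num)
  have key : ∀ n : ℤ, tt (q ^ 5) n * (-q) ^ n = q ^ (5 * (n * (n - 1)) + n) := fun n => by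
    rw [tt, neg_eq_neg_one_mul q, mul_zpow, zpow_add₀ hq0.ne', zpow_mul q 5]
    have h1 : (-1 : ℝ) ^ n * (-1) ^ n = 1 := by rw [← mul_zpow]; simp
    rw [show (q ^ (5 : ℤ)) = q ^ 5 by norm_cast]
    linear_combination (q ^ 5) ^ (n * (n - 1)) * q ^ n * h1
  constructor
  · rw [ramTheta, th, Complex.ofReal_tsum]
    refine tsum_congr fun n => ?_
    have := ram_term hq0 1 9 n (5 * (n * (n - 1)) + n) (by push_cast; ring)
    rw [key, ← this, pow_one]
  · rw [th]
    refine (summable_tt hx0 hx1 (b := -q) (neg_lt_zero.mpr hq0).ne).of_norm.tsum_pos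
      (fun n => ?_) 0 ?_
    · rw [key]; positivity
    · rw [key]; positivity

lemma f46_eq {q : ℝ} (hq0 : 0 < q) :
    ramTheta ((q : ℂ) ^ 4) ((q : ℂ) ^ 6) = ((th (q ^ 5) (-q * q ^ 5) : ℝ) : ℂ) := by
  rw [ramTheta, th, Complex.ofReal_tsum, ← (Equiv.neg ℤ).tsum_eq]
  refine tsum_congr fun n => ?_
  simp only [Equiv.neg_apply]
  rw [ram_term hq0 4 6 (-n) (5 * (n * (n - 1)) + n + 5 * n) (by push_cast; ring)]
  congr 1
  rw [tt, neg_eq_neg_one_mul q, mul_zpow, mul_zpow, zpow_add₀ hq0.ne', zpow_add₀ hq0.ne', zpow_mul q 5,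
    zpow_mul q 5]
  have h1 : (-1 : ℝ) ^ n * (-1) ^ n = 1 := by rw [← mul_zpow]; simp
  rw [show (q ^ (5 : ℤ)) = q ^ 5 by norm_cast]
  linear_combination (-1 : ℝ) * (q ^ 5) ^ (n * (n - 1)) * q ^ n * (q ^ 5) ^ n * h1

lemma poch_eq {q : ℝ} (hq0 : 0 < q) (hq1 : q < 1) :
    qPochInf ((q : ℂ) ^ 10) ((q : ℂ) ^ 10) = ((PP (q ^ 5) : ℝ) : ℂ) := by
  have hx0 : 0 < q ^ 5 := by positivity
  have hx1 : q ^ 5 < 1 := pow_lt_one₀ hq0.le hq1 (by norm_num)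
  have h := (mult_fac hx0 hx1).map_tprod Complex.ofRealHom Complex.continuous_ofReal
  rw [PP, qPochInf]
  refine Eq.trans ?_ h.symm
  refine tprod_congr fun k => ?_
  simp only [Complex.ofRealHom_eq_coe]
  push_cast
  ring

theorem stmt7 (q : ℝ) (hq0 : 0 < q) (hq1 : q < 1) :
    phi (-(q : ℂ) ^ 5) ≠ 0 ∧ ramTheta (q : ℂ) ((q : ℂ) ^ 9) ≠ 0 ∧
    (∑' n : ℤ, (q : ℂ) ^ (5 * n) / (1 + (q : ℂ) ^ (10 * n + 1)))
      = ramTheta ((q : ℂ) ^ 4) ((q : ℂ) ^ 6) * (qPochInf ((q : ℂ) ^ 10) ((q : ℂ) ^ 10)) ^ 3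
        / (phi (-(q : ℂ) ^ 5) * ramTheta (q : ℂ) ((q : ℂ) ^ 9)) := by
  have hx0 : 0 < q ^ 5 := by positivity
  have hx1 : q ^ 5 < 1 := pow_lt_one₀ hq0.le hq1 (by norm_num)
  obtain ⟨h19, hpos⟩ := (f19_eq hq0).resolve_right (not_le.mpr hq1)
  have hC := CC_one hx0 hx1
  rw [CC_one_eq hx0 hx1] at hC
  have hP := pow_ne_zero 3 (PP_ne hx0 hx1)
  have hth : th (q ^ 5) (q ^ 5) ≠ 0 := fun h => hP (by rw [hC, h, zero_mul])
  have hm := main_id hx0 hx1 (neg_lt_zero.mpr hq0)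
  have hsum : (∑' n : ℤ, (q : ℂ) ^ (5 * n) / (1 + (q : ℂ) ^ (10 * n + 1)))
      = ((∑' n : ℤ, (q ^ 5) ^ n / (1 - -q * (q ^ 5) ^ (2 * n)) : ℝ) : ℂ) := by
    rw [Complex.ofReal_tsum]
    refine tsum_congr fun n => ?_
    have hqc : (q : ℂ) ≠ 0 := by exact_mod_cast hq0.ne'
    push_cast
    rw [show (q : ℂ) ^ 5 = (q : ℂ) ^ (5 : ℤ) by norm_cast, ← zpow_mul, ← zpow_mul,
      zpow_add_one₀ hqc, show (5 : ℤ) * (2 * n) = 10 * n by ring]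
    congr 1
    ring
  rw [hsum, phi_eq hq0, h19, f46_eq hq0, poch_eq hq0 hq1]
  refine ⟨by exact_mod_cast hth, by exact_mod_cast hpos.ne', ?_⟩
  norm_cast
  rw [eq_div_iff (mul_ne_zero hth hpos.ne')]
  linear_combination th (q ^ 5) (q ^ 5) * hm - th (q ^ 5) (-q * q ^ 5) * hC
end

section
/- Let q be a real number with 0 < q < 1. Then Ω₁ − Ω₂ = (ψ(q²)² − q²·ψ(q^{10})²) / ψ(−q⁵)². -/
noncomputable def Omega1 (q : ℝ) : ℂ :=
  ramTheta ((q : ℂ) ^ 4) ((q : ℂ) ^ 6) / ramTheta (-(q : ℂ)) (-(q : ℂ) ^ 9)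

noncomputable def Omega2 (q : ℝ) : ℂ :=
  (q : ℂ) * ramTheta ((q : ℂ) ^ 2) ((q : ℂ) ^ 8) / ramTheta (-(q : ℂ) ^ 3) (-(q : ℂ) ^ 7)

/-- The general term of the theta series, in logarithmic coordinates. -/
noncomputable def thTerm (α β : ℂ) (n : ℤ) : ℂ :=
  Complex.exp (α * (n * (n + 1) / 2) + β * (n * (n - 1) / 2))

/-- The theta series in logarithmic coordinates. -/
noncomputable def Th (α β : ℂ) : ℂ := ∑' n : ℤ, thTerm α β n

theorem exp_pow_half (α : ℂ) (k : ℤ) (hk : 0 ≤ k) (he : Even k) :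
    Complex.exp α ^ (k / 2).toNat = Complex.exp (α * (k / 2)) := by
  obtain ⟨r, rfl⟩ := he
  have h1 : (r + r) / 2 = r := by omega
  rw [h1, ← Complex.exp_nat_mul]
  congr 1
  have h2 : ((r.toNat : ℤ) : ℂ) = (r : ℂ) := by
    rw [Int.toNat_of_nonneg (by omega)]
  rw [Int.cast_natCast] at h2
  rw [h2]; push_cast; ring

theorem ramTheta_exp (α β : ℂ) : ramTheta (Complex.exp α) (Complex.exp β) = Th α β := by
  unfold ramTheta Th
  congr 1; funext n
  have h1 : 0 ≤ n * (n + 1) := by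
    rcases le_or_gt 0 n with h | h
    · positivity
    · nlinarith
  have h2 : 0 ≤ n * (n - 1) := by
    rcases le_or_gt n 0 with h | h
    · nlinarith
    · nlinarith
  have e2 : Even (n * (n - 1)) := by
    have := Int.even_mul_succ_self (n - 1)
    rwa [sub_add_cancel, mul_comm] at this
  rw [exp_pow_half α _ h1 (Int.even_mul_succ_self n), exp_pow_half β _ h2 e2, ← Complex.exp_add]
  unfold thTerm
  push_cast
  rfl

theorem thTerm_neg (α β : ℂ) (n : ℤ) : thTerm α β (-n) = thTerm β α n := by
  unfold thTerm; congr 1; push_cast; ring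

theorem summable_nat (α β : ℂ) (h : (α + β).re < 0) :
    Summable (fun n : ℕ => ‖thTerm α β (n : ℤ)‖) := by
  have hc : Filter.Tendsto (fun n : ℕ => Real.exp (α.re) * (Real.exp ((α + β).re)) ^ n)
      Filter.atTop (nhds (Real.exp α.re * 0)) := by
    apply Filter.Tendsto.const_mul
    apply tendsto_pow_atTop_nhds_zero_of_lt_one (Real.exp_pos _).le
    rwa [Real.exp_lt_one_iff]
  rw [mul_zero] at hc
  refine summable_of_ratio_test_tendsto_lt_one (l := 0) zero_lt_one ?_ ?_
  · filter_upwards with n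
    simp [thTerm]
  · refine hc.congr ?_
    intro n
    rw [norm_norm, norm_norm]
    unfold thTerm
    rw [← norm_div, ← Complex.exp_sub, Complex.norm_exp, ← Real.exp_nat_mul, ← Real.exp_add]
    congr 1
    have : (α * (((n + 1 : ℕ) : ℤ) * (((n + 1 : ℕ) : ℤ) + 1) / 2)
        + β * (((n + 1 : ℕ) : ℤ) * (((n + 1 : ℕ) : ℤ) - 1) / 2)
        - (α * (((n : ℕ) : ℤ) * (((n : ℕ) : ℤ) + 1) / 2)
        + β * (((n : ℕ) : ℤ) * (((n : ℕ) : ℤ) - 1) / 2)) : ℂ) = α + ((n : ℝ) : ℂ) * (α + β) := by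
      push_cast; ring
    rw [this, Complex.add_re α (((n : ℝ) : ℂ) * (α + β)), Complex.re_ofReal_mul]

theorem summable_th (α β : ℂ) (h : (α + β).re < 0) : Summable (fun n : ℤ => ‖thTerm α β n‖) := by
  refine Summable.of_nat_of_neg (summable_nat α β h) ?_
  simp only [thTerm_neg]
  exact summable_nat β α (by rwa [add_comm])

theorem Th_mul (α β γ δ : ℂ) (h : (α + β).re < 0) (h' : (γ + δ).re < 0) :
    Th α β * Th γ δ = ∑' p : ℤ × ℤ, thTerm α β p.1 * thTerm γ δ p.2 :=
  tsum_mul_tsum_of_summable_norm (summable_th α β h) (summable_th γ δ h')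

theorem summable_mul2 (α β γ δ : ℂ) (h : (α + β).re < 0) (h' : (γ + δ).re < 0) :
    Summable (fun p : ℤ × ℤ => thTerm α β p.1 * thTerm γ δ p.2) :=
  summable_mul_of_summable_norm (summable_th α β h) (summable_th γ δ h')

theorem tsum_split {ι κ : Type} {k : ℕ} (e : Fin k × ι ≃ κ) (F : κ → ℂ) (hF : Summable F) :
    ∑' x, F x = ∑ i : Fin k, ∑' y, F (e (i, y)) := by
  rw [← e.tsum_eq F]
  have hs : Summable (fun c => F (e c)) := e.summable_iff.mpr hF
  rw [hs.tsum_prod, tsum_fintype]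

/-- even/odd decomposition of `ℤ` -/
noncomputable def eD : Fin 2 × ℤ ≃ ℤ :=
  Equiv.ofBijective (fun p => if p.1 = 0 then 2 * p.2 else 1 - 2 * p.2) (by
    constructor
    · rintro ⟨i, x⟩ ⟨j, y⟩ h
      fin_cases i <;> fin_cases j <;> simp at h ⊢ <;> omega
    · intro z
      rcases Int.emod_two_eq_zero_or_one z with h | h
      · exact ⟨(0, z / 2), by simp; omega⟩
      · exact ⟨(1, (1 - z) / 2), by simp; omega⟩)

theorem eD_zero (x : ℤ) : eD (0, x) = 2 * x := rfl
theorem eD_one (x : ℤ) : eD (1, x) = 1 - 2 * x := rfl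

theorem Th_D (α β : ℂ) (h : (α + β).re < 0) :
    Th α β = Th (3 * α + β) (α + 3 * β) + Complex.exp α * Th (β - α) (5 * α + 3 * β) := by
  have := tsum_split eD (thTerm α β) (summable_th α β h).of_norm
  unfold Th
  rw [this, Fin.sum_univ_two, ← tsum_mul_left]
  congr 1
  · congr 1; funext n
    simp only [eD_zero, thTerm]
    congr 1; push_cast; ring
  · congr 1; funext n
    simp only [eD_one, thTerm]
    rw [← Complex.exp_add]
    congr 1; push_cast; ring

noncomputable def eP : Fin 2 × (ℤ × ℤ) ≃ ℤ × ℤ :=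
  Equiv.ofBijective (fun p => if p.1 = 0 then (p.2.1 + p.2.2, p.2.1 - p.2.2)
      else (1 - p.2.1 - p.2.2, p.2.2 - p.2.1)) (by
    constructor
    · rintro ⟨i, x, x'⟩ ⟨j, y, y'⟩ h
      fin_cases i <;> fin_cases j <;> simp at h ⊢ <;> omega
    · rintro ⟨z, w⟩
      rcases Int.emod_two_eq_zero_or_one (z + w) with h | h
      · exact ⟨(0, (z + w) / 2, (z - w) / 2), by simp; omega⟩
      · exact ⟨(1, (1 - z - w) / 2, (1 - z + w) / 2), by simp; omega⟩)

theorem eP_zero (x : ℤ × ℤ) : eP (0, x) = (x.1 + x.2, x.1 - x.2) := rfl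
theorem eP_one (x : ℤ × ℤ) : eP (1, x) = (1 - x.1 - x.2, x.2 - x.1) := rfl

theorem Th_P (α β γ δ : ℂ) (h : (α + β).re < 0) (hs : γ + δ = α + β) :
    Th α β * Th γ δ = Th (α + γ) (β + δ) * Th (α + δ) (β + γ)
      + Complex.exp α * (Th (β - γ) (α + 2 * γ + δ) * Th (β - δ) (α + γ + 2 * δ)) := by
  obtain rfl : δ = α + β - γ := by rw [← hs]; ring
  have h0 : (α + β).re = α.re + β.re := Complex.add_re _ _
  have h1 : (γ + (α + β - γ)).re < 0 := by rwa [hs]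
  rw [Th_mul _ _ _ _ h h1, tsum_split eP _ (summable_mul2 _ _ _ _ h h1), Fin.sum_univ_two,
    Th_mul, Th_mul, ← tsum_mul_left]
  · congr 1
    · congr 1; funext n
      simp only [eP_zero, thTerm]
      rw [← Complex.exp_add, ← Complex.exp_add]
      congr 1; push_cast; ring
    · congr 1; funext n
      simp only [eP_one, thTerm]
      rw [← Complex.exp_add, ← Complex.exp_add, ← Complex.exp_add]
      congr 1; push_cast; ring
  all_goals (simp at h ⊢; linarith)

noncomputable def eL : ℤ × ℤ ≃ ℤ × ℤ :=
  Equiv.ofBijective (fun p => (p.1 - p.2,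
      if (p.1 + p.2) % 2 = 0 then (p.1 + p.2) / 2 else (1 - (p.1 + p.2)) / 2)) (by
    constructor
    · rintro ⟨x, x'⟩ ⟨y, y'⟩ h
      simp only [Prod.mk.injEq] at h ⊢
      obtain ⟨h1, h2⟩ := h
      split_ifs at h2 <;> omega
    · rintro ⟨s, j⟩
      rcases Int.emod_two_eq_zero_or_one s with h | h
      · refine ⟨((s + 2 * j) / 2, (2 * j - s) / 2), ?_⟩
        simp only [Prod.mk.injEq]
        split_ifs <;> omega
      · refine ⟨((s + 1 - 2 * j) / 2, (1 - 2 * j - s) / 2), ?_⟩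
        simp only [Prod.mk.injEq]
        split_ifs <;> omega)

theorem eL_apply (p : ℤ × ℤ) : eL p = (p.1 - p.2,
      if (p.1 + p.2) % 2 = 0 then (p.1 + p.2) / 2 else (1 - (p.1 + p.2)) / 2) := rfl

theorem Th_L (α β : ℂ) (h : (α + β).re < 0) :
    Th α β * Th (α + β) (3 * (α + β)) = Th α (α + 2 * β) * Th β (2 * α + β) := by
  rw [Th_mul, Th_mul, ← eL.tsum_eq]
  · congr 1; funext ⟨m, n⟩
    simp only [eL_apply, thTerm]
    rw [← Complex.exp_add, ← Complex.exp_add]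
    congr 1
    split_ifs with hp
    · obtain ⟨t, ht⟩ : ∃ t, m + n = 2 * t := ⟨(m + n) / 2, by omega⟩
      obtain rfl : m = 2 * t - n := by omega
      have : (2 * t - n + n) / 2 = t := by omega
      rw [this]; push_cast; ring
    · obtain ⟨t, ht⟩ : ∃ t, 1 - (m + n) = 2 * t := ⟨(1 - (m + n)) / 2, by omega⟩
      obtain rfl : m = 1 - 2 * t - n := by omega
      have : (1 - (1 - 2 * t - n + n)) / 2 = t := by omega
      rw [this]; push_cast; ring
  all_goals (simp at h ⊢; linarith)

noncomputable def eG : Fin 5 × (ℤ × ℤ) ≃ ℤ × ℤ :=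
  Equiv.ofBijective (fun p => (2 * p.2.1 + p.2.2 + ((p.1 : ℕ) : ℤ), 2 * p.2.2 - p.2.1)) (by
    constructor
    · rintro ⟨i, x, x'⟩ ⟨j, y, y'⟩ h
      simp only [Prod.mk.injEq, Fin.ext_iff] at h ⊢
      omega
    · rintro ⟨u, v⟩
      refine ⟨(⟨((u + 2 * v) % 5).toNat, by omega⟩, 2 * ((u + 2 * v) / 5) - v,
        (u + 2 * v) / 5), ?_⟩
      simp only [Prod.mk.injEq]
      omega)

theorem eG_apply (i : Fin 5) (p : ℤ × ℤ) :
    eG (i, p) = (2 * p.1 + p.2 + ((i : ℕ) : ℤ), 2 * p.2 - p.1) := rfl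

theorem Th_swap (α β : ℂ) : Th α β = Th β α := by
  unfold Th
  rw [← (Equiv.neg ℤ).tsum_eq]
  congr 1; funext n
  exact thTerm_neg α β n

theorem Th_shift2 (α β γ δ ε : ℂ) (G : ℤ × ℤ → ℂ) (i j : ℤ)
    (h : (α + β).re < 0) (h' : (γ + δ).re < 0)
    (hG : ∀ m n : ℤ, G (m + i, n + j) = Complex.exp ε * (thTerm α β m * thTerm γ δ n)) :
    ∑' p, G p = Complex.exp ε * (Th α β * Th γ δ) := by
  rw [Th_mul _ _ _ _ h h', ← tsum_mul_left,
    ← (Equiv.prodCongr (Equiv.addRight i) (Equiv.addRight j)).tsum_eq G]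
  congr 1; funext ⟨m, n⟩
  exact hG m n

theorem Th_G (ρ : ℂ) (h : ρ.re < 0) :
    Th ρ ρ * Th 0 (2 * ρ) = 2 * (Th (6 * ρ) (4 * ρ) * Th (3 * ρ) (7 * ρ))
      + 2 * Complex.exp ρ * (Th (2 * ρ) (8 * ρ) * Th ρ (9 * ρ))
      + Complex.exp ρ * (Th 0 (10 * ρ) * Th (5 * ρ) (5 * ρ)) := by
  have a1 : (ρ + ρ).re < 0 := by simp; linarith
  have a2 : (0 + 2 * ρ).re < 0 := by simp; linarith
  rw [Th_mul _ _ _ _ a1 a2, tsum_split eG _ (summable_mul2 _ _ _ _ a1 a2), Fin.sum_univ_five]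
  rw [Th_shift2 (6 * ρ) (4 * ρ) (3 * ρ) (7 * ρ) 0 (fun y => thTerm ρ ρ (eG (0, y)).1 * thTerm 0 (2 * ρ) (eG (0, y)).2) 0 0,
   Th_shift2 (10 * ρ) 0 (5 * ρ) (5 * ρ) ρ (fun y => thTerm ρ ρ (eG (1, y)).1 * thTerm 0 (2 * ρ) (eG (1, y)).2) 0 0,
   Th_shift2 (4 * ρ) (6 * ρ) (7 * ρ) (3 * ρ) 0 (fun y => thTerm ρ ρ (eG (2, y)).1 * thTerm 0 (2 * ρ) (eG (2, y)).2) (-1) 0,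
   Th_shift2 (8 * ρ) (2 * ρ) (9 * ρ) ρ ρ (fun y => thTerm ρ ρ (eG (3, y)).1 * thTerm 0 (2 * ρ) (eG (3, y)).2) (-1) 0,
   Th_shift2 (2 * ρ) (8 * ρ) ρ (9 * ρ) ρ (fun y => thTerm ρ ρ (eG (4, y)).1 * thTerm 0 (2 * ρ) (eG (4, y)).2) (-2) (-1)]
  · rw [Th_swap (4 * ρ) (6 * ρ), Th_swap (7 * ρ) (3 * ρ), Th_swap (8 * ρ) (2 * ρ),
      Th_swap (9 * ρ) ρ, Th_swap (10 * ρ) 0, Complex.exp_zero]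
    ring
  all_goals first
    | (intro m n
       simp only [eG_apply, thTerm]
       rw [← Complex.exp_add, ← Complex.exp_add, ← Complex.exp_add]
       congr 1; push_cast
       simp
       ring)
    | (simp; linarith)

theorem thTerm_bound (α β : ℂ) (D : ℝ) (hD : D < 1) (ha : ‖Complex.exp α‖ ≤ 1)
    (hab : ‖Complex.exp (α + β)‖ ≤ D) (n : ℕ) :
    ‖thTerm α β ((n : ℤ) + 1)‖ ≤ ‖Complex.exp α‖ * D ^ n := by
  have hD0 : 0 ≤ D := (norm_nonneg _).trans hab
  have e : thTerm α β ((n : ℤ) + 1)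
      = Complex.exp (α + β) ^ (n * (n + 1) / 2) * Complex.exp α ^ n * Complex.exp α := by
    have h2 : ((n * (n + 1) / 2 : ℕ) : ℂ) = (n : ℂ) * (n + 1) / 2 := by
      rw [Nat.cast_div (Nat.even_mul_succ_self n).two_dvd (by norm_num)]
      push_cast; rfl
    rw [← Complex.exp_nat_mul, ← Complex.exp_nat_mul, ← Complex.exp_add, ← Complex.exp_add, h2]
    unfold thTerm; congr 1; push_cast; ring
  have hn : n ≤ n * (n + 1) / 2 := by
    rw [Nat.le_div_iff_mul_le (by norm_num)]
    rcases Nat.eq_zero_or_pos n with h | h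
    · simp [h]
    · exact Nat.mul_le_mul_left n (by omega)
  rw [e, norm_mul, norm_mul, norm_pow, norm_pow, mul_comm]
  refine mul_le_mul_of_nonneg_left ?_ (norm_nonneg _)
  calc ‖Complex.exp (α + β)‖ ^ (n * (n + 1) / 2) * ‖Complex.exp α‖ ^ n
      ≤ D ^ (n * (n + 1) / 2) * 1 := by
        refine mul_le_mul (pow_le_pow_left₀ (norm_nonneg _) hab _)
          (pow_le_one₀ (norm_nonneg _) ha) (by positivity) (by positivity)
    _ ≤ D ^ n := by
        rw [mul_one]
        exact pow_le_pow_of_le_one hD0 hD.le hn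

theorem tail_bound (α β : ℂ) (D : ℝ) (hD : D < 1) (ha : ‖Complex.exp α‖ ≤ 1)
    (hab : ‖Complex.exp (α + β)‖ ≤ D) :
    ‖∑' n : ℕ, thTerm α β ((n : ℤ) + 1)‖ ≤ ‖Complex.exp α‖ * (1 - D)⁻¹ := by
  have hD0 : 0 ≤ D := (norm_nonneg _).trans hab
  exact tsum_of_norm_bounded ((hasSum_geometric_of_lt_one hD0 hD).mul_left _)
    (thTerm_bound α β D hD ha hab)

theorem Th_bound (α β : ℂ) (c d : ℝ) (hd0 : 0 < d) (hcd : c + d + d ^ 2 < 1)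
    (ha : ‖Complex.exp α‖ ≤ c) (hb : ‖Complex.exp β‖ ≤ c)
    (hab : ‖Complex.exp (α + β)‖ ≤ d ^ 2) : Th α β ≠ 0 := by
  have hc0 : 0 < c := lt_of_lt_of_le (by simp) ha
  have hd1 : d ^ 2 < 1 := by nlinarith
  have hre : (α + β).re < 0 := by
    have := hab.trans_lt hd1
    rwa [Complex.norm_exp, Real.exp_lt_one_iff] at this
  have hab' : ‖Complex.exp (β + α)‖ ≤ d ^ 2 := by rwa [add_comm]
  have t1 := tail_bound α β (d ^ 2) hd1 (by nlinarith) hab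
  have t2 := tail_bound β α (d ^ 2) hd1 (by nlinarith) hab'
  have s1 : Summable (fun n : ℕ => thTerm α β (n : ℤ)) := (summable_nat α β hre).of_norm
  have s2 : Summable (fun n : ℕ => thTerm α β (-((n : ℤ) + 1))) := by
    simp only [thTerm_neg]
    have := (summable_nat β α (by rwa [add_comm])).of_norm
    have := (summable_nat_add_iff 1).mpr this
    simpa using this
  have e : Th α β = 1 + ∑' n : ℕ, thTerm α β ((n : ℤ) + 1)
      + ∑' n : ℕ, thTerm β α ((n : ℤ) + 1) := by
    unfold Th
    rw [tsum_of_nat_of_neg_add_one s1 s2, s1.tsum_eq_zero_add]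
    simp only [thTerm_neg]
    congr 2
    simp [thTerm]
  intro h0
  have hsum : ‖Complex.exp α‖ + ‖Complex.exp β‖ ≤ c + d := by
    rw [Complex.exp_add, norm_mul] at hab
    by_contra! hcon
    have h1 : d < ‖Complex.exp α‖ := by linarith
    have h2 : d < ‖Complex.exp β‖ := by linarith
    nlinarith
  have h1 : (1 : ℝ) ≤ (‖Complex.exp α‖ + ‖Complex.exp β‖) * (1 - d ^ 2)⁻¹ := by
    have : (1 : ℂ) = -(∑' n : ℕ, thTerm α β ((n : ℤ) + 1)
      + ∑' n : ℕ, thTerm β α ((n : ℤ) + 1)) := by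
      rw [h0] at e; linear_combination -e
    calc (1 : ℝ) = ‖(1 : ℂ)‖ := by simp
      _ ≤ _ := by
        rw [this, norm_neg, add_mul]
        exact (norm_add_le _ _).trans (add_le_add t1 t2)
  rw [← div_eq_mul_inv, le_div_iff₀ (by linarith)] at h1
  linarith

theorem Th_ne_zero_aux (c d : ℝ) (hd0 : 0 < d) (hcd : c + d + d ^ 2 < 1) (N : ℕ) :
    ∀ α β : ℂ, ‖Complex.exp α‖ ≤ c → ‖Complex.exp β‖ ≤ c →
      ‖Complex.exp (α + β)‖ ^ (2 ^ N) ≤ d ^ 2 → Th α β ≠ 0 := by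
  induction N with
  | zero =>
    intro α β ha hb hab
    exact Th_bound α β c d hd0 hcd ha hb (by simpa using hab)
  | succ N ih =>
    intro α β ha hb hab h0
    have hc0 : 0 < c := lt_of_lt_of_le (by simp) ha
    have hc1 : c < 1 := by nlinarith
    have hp : ‖Complex.exp (α + β)‖ ≤ 1 := by
      rw [Complex.exp_add, norm_mul]
      exact mul_le_one₀ (by linarith) (norm_nonneg _) (by linarith)
    have hre : (α + β).re < 0 := by
      have : ‖Complex.exp (α + β)‖ < 1 := by
        rw [Complex.exp_add, norm_mul]
        nlinarith [norm_nonneg (Complex.exp α), norm_nonneg (Complex.exp β)]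
      rwa [Complex.norm_exp, Real.exp_lt_one_iff] at this
    have hL := Th_L α β hre
    rw [h0, zero_mul] at hL
    have hsq : ∀ γ : ℂ, γ = (α + β) + (α + β) → ‖Complex.exp γ‖ ^ (2 ^ N) ≤ d ^ 2 := by
      rintro γ rfl
      rw [Complex.exp_add, norm_mul, ← sq, ← pow_mul, ← pow_succ']
      exact hab
    rcases mul_eq_zero.mp hL.symm with h | h
    · refine ih α (α + 2 * β) ha ?_ (hsq _ (by ring)) h
      have : α + 2 * β = (α + β) + β := by ring
      rw [this, Complex.exp_add, norm_mul]
      nlinarith [norm_nonneg (Complex.exp β)]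
    · refine ih β (2 * α + β) hb ?_ (hsq _ (by ring)) h
      have : 2 * α + β = (α + β) + α := by ring
      rw [this, Complex.exp_add, norm_mul]
      nlinarith [norm_nonneg (Complex.exp α)]

theorem Th_ne_zero (α β : ℂ) (ha : α.re < 0) (hb : β.re < 0) : Th α β ≠ 0 := by
  have ha' : ‖Complex.exp α‖ < 1 := by rwa [Complex.norm_exp, Real.exp_lt_one_iff]
  have hb' : ‖Complex.exp β‖ < 1 := by rwa [Complex.norm_exp, Real.exp_lt_one_iff]
  obtain ⟨c, hc, hc1⟩ := exists_between (max_lt ha' hb')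
  obtain ⟨hca, hcb⟩ := max_lt_iff.mp hc
  have hc0 : 0 < c := lt_trans (by simp) hca
  have hab : ‖Complex.exp (α + β)‖ < 1 := by
    rw [Complex.norm_exp, Real.exp_lt_one_iff, Complex.add_re]; linarith
  obtain ⟨N, hN⟩ := exists_pow_lt_of_lt_one (show 0 < ((1 - c) / 3) ^ 2 by
    have : 0 < 1 - c := by linarith
    positivity) hab
  refine Th_ne_zero_aux c ((1 - c) / 3) (by linarith) (by nlinarith) N α β hca.le hcb.le ?_
  refine le_trans ?_ hN.le
  exact pow_le_pow_of_le_one (norm_nonneg _) hab.le Nat.lt_two_pow_self.le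

/-! ### Multiplicative versions -/

theorem re_log_neg {a : ℂ} (h0 : a ≠ 0) (h : ‖a‖ < 1) : (Complex.log a).re < 0 := by
  rw [Complex.log_re]
  exact Real.log_neg (norm_pos_iff.mpr h0) h

theorem exp_nsmul_log {a : ℂ} (h0 : a ≠ 0) (k : ℕ) :
    Complex.exp (k * Complex.log a) = a ^ k := by
  rw [Complex.exp_nat_mul, Complex.exp_log h0]

theorem ramTheta_ne_zero {a b : ℂ} (ha : a ≠ 0) (hb : b ≠ 0) (ha1 : ‖a‖ < 1) (hb1 : ‖b‖ < 1) :
    ramTheta a b ≠ 0 := by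
  rw [← Complex.exp_log ha, ← Complex.exp_log hb, ramTheta_exp]
  exact Th_ne_zero _ _ (re_log_neg ha ha1) (re_log_neg hb hb1)

theorem re_log_add {a b : ℂ} (ha : a ≠ 0) (hb : b ≠ 0) (h : ‖a * b‖ < 1) :
    (Complex.log a + Complex.log b).re < 0 := by
  rw [← Real.exp_lt_one_iff, ← Complex.norm_exp, Complex.exp_add, Complex.exp_log ha,
    Complex.exp_log hb]
  exact h

theorem ramTheta_L {a b : ℂ} (ha : a ≠ 0) (hb : b ≠ 0) (h : ‖a * b‖ < 1) :
    ramTheta a b * psi (a * b) = ramTheta a (a * b ^ 2) * ramTheta b (a ^ 2 * b) := by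
  have := Th_L _ _ (re_log_add ha hb h)
  simp only [← ramTheta_exp] at this
  have e2 : ∀ x : ℂ, Complex.exp (2 * x) = Complex.exp x ^ 2 := fun x => by
    rw [← Complex.exp_nat_mul]; norm_num
  have e3 : ∀ x : ℂ, Complex.exp (3 * x) = Complex.exp x ^ 3 := fun x => by
    rw [← Complex.exp_nat_mul]; norm_num
  simpa only [psi, Complex.exp_add, e2, e3, Complex.exp_log ha, Complex.exp_log hb] using this

theorem ramTheta_D {a b : ℂ} (ha : a ≠ 0) (hb : b ≠ 0) (h : ‖a * b‖ < 1) :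
    ramTheta a b = ramTheta (a ^ 3 * b) (a * b ^ 3) + a * ramTheta (b / a) (a ^ 5 * b ^ 3) := by
  have := Th_D _ _ (re_log_add ha hb h)
  simp only [← ramTheta_exp] at this
  have e3 : ∀ x : ℂ, Complex.exp (3 * x) = Complex.exp x ^ 3 := fun x => by
    rw [← Complex.exp_nat_mul]; norm_num
  have e5 : ∀ x : ℂ, Complex.exp (5 * x) = Complex.exp x ^ 5 := fun x => by
    rw [← Complex.exp_nat_mul]; norm_num
  simpa only [Complex.exp_add, Complex.exp_sub, e3, e5, Complex.exp_log ha, Complex.exp_log hb]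
    using this

theorem ramTheta_swap (a b : ℂ) (ha : a ≠ 0) (hb : b ≠ 0) : ramTheta a b = ramTheta b a := by
  have := Th_swap (Complex.log a) (Complex.log b)
  simpa only [← ramTheta_exp, Complex.exp_log ha, Complex.exp_log hb] using this

theorem ramTheta_P {a b c d : ℂ} (ha : a ≠ 0) (hb : b ≠ 0) (hc : c ≠ 0) (hcd : c * d = a * b)
    (h : ‖a * b‖ < 1) :
    ramTheta a b * ramTheta c d = ramTheta (a * c) (b * d) * ramTheta (a * d) (b * c)
      + a * (ramTheta (b / c) (a * c ^ 2 * d) * ramTheta (b / d) (a * c * d ^ 2)) := by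
  obtain ⟨δ, hδ⟩ : ∃ δ, δ = Complex.log a + Complex.log b - Complex.log c := ⟨_, rfl⟩
  have hd : Complex.exp δ = d := by
    rw [hδ, Complex.exp_sub, Complex.exp_add, Complex.exp_log ha, Complex.exp_log hb,
      Complex.exp_log hc, ← hcd]
    field_simp
  have := Th_P _ _ (Complex.log c) δ (re_log_add ha hb h) (by rw [hδ]; ring)
  simp only [← ramTheta_exp] at this
  have e2 : ∀ x : ℂ, Complex.exp (2 * x) = Complex.exp x ^ 2 := fun x => by
    rw [← Complex.exp_nat_mul]; norm_num
  simpa only [Complex.exp_add, Complex.exp_sub, e2, Complex.exp_log ha, Complex.exp_log hb,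
    Complex.exp_log hc, hd] using this

theorem ramTheta_G {r : ℂ} (h0 : r ≠ 0) (h : ‖r‖ < 1) :
    ramTheta r r * ramTheta 1 (r ^ 2) = 2 * (ramTheta (r ^ 6) (r ^ 4) * ramTheta (r ^ 3) (r ^ 7))
      + 2 * r * (ramTheta (r ^ 2) (r ^ 8) * ramTheta r (r ^ 9))
      + r * (ramTheta 1 (r ^ 10) * ramTheta (r ^ 5) (r ^ 5)) := by
  have := Th_G _ (re_log_neg h0 h)
  simp only [← ramTheta_exp] at this
  have e : ∀ k : ℕ, [k.AtLeastTwo] → Complex.exp (OfNat.ofNat k * Complex.log r) = r ^ k := by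
    intro k _
    rw [← exp_nsmul_log h0 k]; rfl
  simpa only [e, Complex.exp_zero, Complex.exp_log h0] using this

theorem psi_sq {r : ℂ} (h0 : r ≠ 0) (h : ‖r‖ < 1) :
    2 * psi r ^ 2 = ramTheta 1 (r ^ 2) * ramTheta r r := by
  have h1 : ‖1 * r‖ < 1 := by simpa using h
  have hD := ramTheta_D one_ne_zero h0 h1
  have hL := ramTheta_L one_ne_zero h0 h1
  simp only [one_pow, one_mul, div_one] at hD hL
  rw [← hL, hD]
  unfold psi
  ring

theorem psi_identity {r : ℂ} (h0 : r ≠ 0) (h : ‖r‖ < 1) :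
    psi r ^ 2 - r * psi (r ^ 5) ^ 2 = ramTheta r (r ^ 4) * ramTheta (r ^ 2) (r ^ 3) := by
  have p1 := psi_sq h0 h
  have p5 := psi_sq (pow_ne_zero 5 h0) (show ‖r ^ 5‖ < 1 by
    rw [norm_pow]; exact pow_lt_one₀ (norm_nonneg _) h (by norm_num))
  have hG := ramTheta_G h0 h
  have hP := ramTheta_P (a := r) (b := r ^ 4) (c := r ^ 2) (d := r ^ 3) h0 (pow_ne_zero _ h0)
    (pow_ne_zero _ h0) (by ring) (by
      rw [← pow_succ', norm_pow]; exact pow_lt_one₀ (norm_nonneg _) h (by norm_num))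
  have x1 : r * r ^ 2 = r ^ 3 := by ring
  have x2 : r ^ 4 * r ^ 3 = r ^ 7 := by ring
  have x3 : r * r ^ 3 = r ^ 4 := by ring
  have x4 : r ^ 4 * r ^ 2 = r ^ 6 := by ring
  have x5 : r ^ 4 / r ^ 2 = r ^ 2 := by field_simp
  have x6 : r ^ 3 * r ^ 2 * r ^ 3 = r ^ 8 := by ring
  have x7 : r ^ 4 / r ^ 3 = r := by field_simp
  have x8 : r * (r ^ 2) ^ 2 * r ^ 3 = r ^ 8 := by ring
  have x9 : r ^ 3 * (r ^ 3) ^ 2 = r ^ 9 := by ring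
  have x10 : (r ^ 5) ^ 2 = r ^ 10 := by ring
  rw [x8, x1, x2, x3, x4, x5, x7, x9,
    ramTheta_swap (r ^ 4) (r ^ 6) (pow_ne_zero _ h0) (pow_ne_zero _ h0)] at hP
  rw [x10] at p5
  rw [hP]
  linear_combination p1 / 2 - r * p5 / 2 + hG / 2

theorem num_identity {r : ℂ} (h0 : r ≠ 0) (h : ‖r‖ < 1) :
    ramTheta (r ^ 4) (r ^ 6) * ramTheta (-r ^ 3) (-r ^ 7)
      - r * ramTheta (r ^ 2) (r ^ 8) * ramTheta (-r) (-r ^ 9)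
      = ramTheta (-r) (r ^ 4) * ramTheta (r ^ 2) (-r ^ 3) := by
  have n : ∀ k : ℕ, k ≠ 0 → ‖r ^ k‖ < 1 := fun k hk => by
    rw [norm_pow]; exact pow_lt_one₀ (norm_nonneg _) h hk
  have z : ∀ k : ℕ, r ^ k ≠ 0 := fun k => pow_ne_zero _ h0
  have P1 := ramTheta_P (a := -r ^ 3) (b := -r ^ 7) (c := r ^ 4) (d := r ^ 6)
    (neg_ne_zero.mpr (z _)) (neg_ne_zero.mpr (z _)) (z _) (by ring) (by
      rw [neg_mul_neg, ← pow_add]; exact n _ (by norm_num))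
  have P2 := ramTheta_P (a := -r) (b := -r ^ 9) (c := r ^ 2) (d := r ^ 8)
    (neg_ne_zero.mpr h0) (neg_ne_zero.mpr (z _)) (z _) (by ring) (by
      rw [neg_mul_neg, ← pow_succ']; exact n _ (by norm_num))
  have D1 := ramTheta_D (a := -r) (b := r ^ 4) (neg_ne_zero.mpr h0) (z _) (by
      rw [neg_mul, norm_neg, ← pow_succ']; exact n _ (by norm_num))
  have D2 := ramTheta_D (a := r ^ 2) (b := -r ^ 3) (z _) (neg_ne_zero.mpr (z _)) (by
      rw [mul_neg, norm_neg, ← pow_add]; exact n _ (by norm_num))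
  rw [show -r ^ 3 * r ^ 4 = -r ^ 7 by ring, show -r ^ 7 * r ^ 6 = -r ^ 13 by ring,
    show -r ^ 3 * r ^ 6 = -r ^ 9 by ring, show -r ^ 7 * r ^ 4 = -r ^ 11 by ring,
    show -r ^ 7 / r ^ 4 = -r ^ 3 by field_simp, show -r ^ 7 / r ^ 6 = -r by field_simp,
    show -r ^ 3 * (r ^ 4) ^ 2 * r ^ 6 = -r ^ 17 by ring,
    show -r ^ 7 * (r ^ 6) ^ 2 = -r ^ 19 by ring] at P1
  rw [show -r * (r ^ 2) ^ 2 * r ^ 8 = -r ^ 13 by ring, show -r * r ^ 2 = -r ^ 3 by ring,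
    show -r ^ 9 * r ^ 8 = -r ^ 17 by ring,
    show -r * r ^ 8 = -r ^ 9 by ring, show -r ^ 9 * r ^ 2 = -r ^ 11 by ring,
    show -r ^ 9 / r ^ 2 = -r ^ 7 by field_simp, show -r ^ 9 / r ^ 8 = -r by field_simp,
    show -r ^ 3 * (r ^ 8) ^ 2 = -r ^ 19 by ring] at P2
  rw [show (-r) ^ 3 * r ^ 4 = -r ^ 7 by ring, show -r * (r ^ 4) ^ 3 = -r ^ 13 by ring,
    show r ^ 4 / -r = -r ^ 3 by field_simp,
    show (-r) ^ 5 * (r ^ 4) ^ 3 = -r ^ 17 by ring] at D1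
  rw [show (r ^ 2) ^ 3 * -r ^ 3 = -r ^ 9 by ring, show r ^ 2 * (-r ^ 3) ^ 3 = -r ^ 11 by ring,
    show -r ^ 3 / r ^ 2 = -r by field_simp,
    show (r ^ 2) ^ 5 * (-r ^ 3) ^ 3 = -r ^ 19 by ring] at D2
  rw [D1, D2]
  linear_combination P1 - r * P2

theorem stmt8 (q : ℝ) (hq0 : 0 < q) (hq1 : q < 1) :
    Omega1 q - Omega2 q
      = (psi ((q : ℂ) ^ 2) ^ 2 - (q : ℂ) ^ 2 * psi ((q : ℂ) ^ 10) ^ 2)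
        / psi (-(q : ℂ) ^ 5) ^ 2 := by
  obtain ⟨r, hr⟩ : ∃ r : ℂ, r = (q : ℂ) := ⟨_, rfl⟩
  have h0 : r ≠ 0 := by rw [hr]; exact_mod_cast hq0.ne'
  have h : ‖r‖ < 1 := by
    rw [hr, Complex.norm_real, Real.norm_of_nonneg hq0.le]; exact hq1
  unfold Omega1 Omega2
  rw [← hr]
  have n : ∀ k : ℕ, k ≠ 0 → ‖r ^ k‖ < 1 := fun k hk => by
    rw [norm_pow]; exact pow_lt_one₀ (norm_nonneg _) h hk
  have z : ∀ k : ℕ, r ^ k ≠ 0 := fun k => pow_ne_zero _ h0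
  have nz : ∀ k : ℕ, -r ^ k ≠ 0 := fun k => neg_ne_zero.mpr (z k)
  have nn : ∀ k : ℕ, k ≠ 0 → ‖-r ^ k‖ < 1 := fun k hk => by
    rw [norm_neg]; exact n k hk
  have d1 : ramTheta (-r) (-r ^ 9) ≠ 0 :=
    ramTheta_ne_zero (neg_ne_zero.mpr h0) (nz 9) (by rwa [norm_neg]) (nn 9 (by norm_num))
  have d3 : ramTheta (-r ^ 3) (-r ^ 7) ≠ 0 :=
    ramTheta_ne_zero (nz 3) (nz 7) (nn 3 (by norm_num)) (nn 7 (by norm_num))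
  have d5 : psi (-r ^ 5) ≠ 0 := by
    unfold psi
    rw [show (-r ^ 5) ^ 3 = -r ^ 15 by ring]
    exact ramTheta_ne_zero (nz 5) (nz 15) (nn 5 (by norm_num)) (nn 15 (by norm_num))
  have L1 := ramTheta_L (a := -r) (b := r ^ 4) (neg_ne_zero.mpr h0) (z 4) (by
    rw [show -r * r ^ 4 = -r ^ 5 by ring]; exact nn 5 (by norm_num))
  have L2 := ramTheta_L (a := r ^ 2) (b := -r ^ 3) (z 2) (nz 3) (by
    rw [show r ^ 2 * -r ^ 3 = -r ^ 5 by ring]; exact nn 5 (by norm_num))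
  rw [show -r * r ^ 4 = -r ^ 5 by ring, show -r * (r ^ 4) ^ 2 = -r ^ 9 by ring,
    show (-r) ^ 2 * r ^ 4 = r ^ 6 by ring] at L1
  rw [show r ^ 2 * -r ^ 3 = -r ^ 5 by ring, show r ^ 2 * (-r ^ 3) ^ 2 = r ^ 8 by ring,
    show (r ^ 2) ^ 2 * -r ^ 3 = -r ^ 7 by ring] at L2
  have hN := num_identity h0 h
  have hψ := psi_identity (z 2) (n 2 (by norm_num))
  rw [show (r ^ 2) ^ 5 = r ^ 10 by ring, show (r ^ 2) ^ 4 = r ^ 8 by ring,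
    show (r ^ 2) ^ 2 = r ^ 4 by ring, show (r ^ 2) ^ 3 = r ^ 6 by ring] at hψ
  rw [hψ, div_sub_div _ _ d1 d3, div_eq_div_iff (mul_ne_zero d1 d3) (pow_ne_zero 2 d5)]
  have hN' : ramTheta (r ^ 4) (r ^ 6) * ramTheta (-r ^ 3) (-r ^ 7)
      - ramTheta (-r) (-r ^ 9) * (r * ramTheta (r ^ 2) (r ^ 8))
      = ramTheta (-r) (r ^ 4) * ramTheta (r ^ 2) (-r ^ 3) := by
    rw [← hN]; ring
  rw [hN']
  calc ramTheta (-r) (r ^ 4) * ramTheta (r ^ 2) (-r ^ 3) * psi (-r ^ 5) ^ 2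
      = (ramTheta (-r) (r ^ 4) * psi (-r ^ 5)) * (ramTheta (r ^ 2) (-r ^ 3) * psi (-r ^ 5)) := by
        ring
    _ = _ := by rw [L1, L2]; ring
end

section
/- Let q be a real number with 0 < q < 1. Then Γ₁·Γ₂ = ψ(q)·ψ(−q⁵) / (ψ(−q)·ψ(q⁵)). -/
noncomputable def Gamma1 (q : ℝ) : ℂ :=
  ramTheta (q : ℂ) ((q : ℂ) ^ 9) / ramTheta (-(q : ℂ)) (-(q : ℂ) ^ 9)

noncomputable def Gamma2 (q : ℝ) : ℂ :=
  ramTheta ((q : ℂ) ^ 3) ((q : ℂ) ^ 7) / ramTheta (-(q : ℂ) ^ 3) (-(q : ℂ) ^ 7)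

namespace JTP

/-- Finite `q`-factorial `(Q;Q)_n`. -/
noncomputable def p (Q : ℝ) (n : ℕ) : ℝ := ∏ k ∈ Finset.range n, (1 - Q ^ (k + 1))

/-- Reciprocal of the `q`-factorial, extended by zero to negative integers. -/
noncomputable def e (Q : ℝ) (k : ℤ) : ℝ := if k < 0 then 0 else (p Q k.toNat)⁻¹

/-- The limit of `p Q`. -/
noncomputable def P (Q : ℝ) : ℝ := ∏' k : ℕ, (1 + -Q ^ (k + 1))

variable {Q : ℝ}

theorem fac_pos (h0 : 0 < Q) (h1 : Q < 1) (k : ℕ) : 0 < 1 - Q ^ (k + 1) := by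
  have := pow_lt_one₀ h0.le h1 (Nat.succ_ne_zero k)
  simp only [Nat.succ_eq_add_one] at this
  linarith

theorem p_pos (h0 : 0 < Q) (h1 : Q < 1) (n : ℕ) : 0 < p Q n :=
  Finset.prod_pos fun k _ => fac_pos h0 h1 k

theorem p_succ (n : ℕ) : p Q (n + 1) = p Q n * (1 - Q ^ (n + 1)) :=
  Finset.prod_range_succ _ _

theorem p_anti (h0 : 0 < Q) (h1 : Q < 1) : Antitone (p Q) := by
  refine antitone_nat_of_succ_le fun n => ?_
  rw [p_succ]
  have := p_pos h0 h1 n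
  have h2 : 0 < Q ^ (n + 1) := by positivity
  nlinarith

theorem summ_pow (h0 : 0 < Q) (h1 : Q < 1) : Summable fun k : ℕ => ‖-Q ^ (k + 1)‖ := by
  have := (summable_geometric_of_lt_one h0.le h1).mul_right Q
  refine this.congr fun k => ?_
  rw [norm_neg, Real.norm_of_nonneg (by positivity), pow_succ]

theorem p_tendsto (h0 : 0 < Q) (h1 : Q < 1) :
    Filter.Tendsto (p Q) Filter.atTop (nhds (P Q)) := by
  have h := (multipliable_one_add_of_summable (summ_pow h0 h1)).hasProd.tendsto_prod_nat
  refine h.congr fun n => ?_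
  simp [p, sub_eq_add_neg]

theorem P_ne (h0 : 0 < Q) (h1 : Q < 1) : P Q ≠ 0 := by
  refine tprod_one_add_ne_zero_of_summable (fun k => ?_) (summ_pow h0 h1)
  have := fac_pos h0 h1 k
  rw [← sub_eq_add_neg]
  exact this.ne'

theorem P_le (h0 : 0 < Q) (h1 : Q < 1) (n : ℕ) : P Q ≤ p Q n :=
  (p_anti h0 h1).le_of_tendsto (p_tendsto h0 h1) n

theorem P_pos (h0 : 0 < Q) (h1 : Q < 1) : 0 < P Q :=
  lt_of_le_of_ne (ge_of_tendsto' (p_tendsto h0 h1) fun n => (p_pos h0 h1 n).le) (P_ne h0 h1).symm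

theorem e_rec (h0 : 0 < Q) (h1 : Q < 1) (k : ℤ) : e Q (k - 1) = (1 - Q ^ k) * e Q k := by
  unfold e
  rcases lt_trichotomy k 0 with h | h | h
  · rw [if_pos h, if_pos (by omega), mul_zero]
  · subst h; simp
  · obtain ⟨m, rfl⟩ : ∃ m : ℕ, k = m + 1 := ⟨(k - 1).toNat, by omega⟩
    rw [if_neg (by omega), if_neg (by omega)]
    have h2 : ((m : ℤ) + 1 - 1).toNat = m := by omega
    have h3 : ((m : ℤ) + 1).toNat = m + 1 := by omega
    rw [h2, h3, p_succ]
    have h4 : Q ^ ((m : ℤ) + 1) = Q ^ (m + 1) := by exact_mod_cast zpow_natCast Q (m + 1)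
    rw [h4]
    have := (p_pos h0 h1 m).ne'
    have := (fac_pos h0 h1 m).ne'
    field_simp

theorem e_nonneg (h0 : 0 < Q) (h1 : Q < 1) (k : ℤ) : 0 ≤ e Q k := by
  unfold e
  split_ifs
  · exact le_rfl
  · exact inv_nonneg.2 (p_pos h0 h1 _).le

theorem e_le (h0 : 0 < Q) (h1 : Q < 1) (k : ℤ) : e Q k ≤ (P Q)⁻¹ := by
  unfold e
  split_ifs
  · exact inv_nonneg.2 (P_pos h0 h1).le
  · exact inv_anti₀ (P_pos h0 h1) (P_le h0 h1 _)

theorem e_tendsto (h0 : 0 < Q) (h1 : Q < 1) (j : ℤ) :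
    Filter.Tendsto (fun n : ℕ => e Q (n + j)) Filter.atTop (nhds (P Q)⁻¹) := by
  have h2 : Filter.Tendsto (fun n : ℕ => ((n : ℤ) + j).toNat) Filter.atTop Filter.atTop := by
    refine Filter.tendsto_atTop.2 fun b => ?_
    filter_upwards [Filter.eventually_ge_atTop (b + j.natAbs)] with n hn
    omega
  have h3 := ((p_tendsto h0 h1).comp h2).inv₀ (P_ne h0 h1)
  refine h3.congr' ?_
  filter_upwards [Filter.eventually_ge_atTop j.natAbs] with n hn
  simp only [e, Function.comp]
  rw [if_neg (by omega)]

/-- Central `q`-binomial coefficients. -/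
noncomputable def c (Q : ℝ) (n : ℕ) (j : ℤ) : ℝ := p Q (2 * n) * e Q (n + j) * e Q (n + -j)

theorem c_rec (h0 : 0 < Q) (h1 : Q < 1) (n : ℕ) (j : ℤ) :
    c Q (n + 1) j = (1 + Q ^ (2 * n + 1)) * c Q n j + Q ^ n * Q ^ (1 - j) * c Q n (j - 1)
      + Q ^ n * Q ^ (1 + j) * c Q n (j + 1) := by
  unfold c
  have hp : p Q (2 * (n + 1)) = p Q (2 * n) * (1 - Q ^ (2 * n + 1)) * (1 - Q ^ (2 * n + 2)) := by
    rw [show 2 * (n + 1) = 2 * n + 1 + 1 by ring, p_succ, p_succ]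
  have a1 : ((n + 1 : ℕ) : ℤ) + j = (n + j) + 1 := by push_cast; ring
  have a2 : ((n + 1 : ℕ) : ℤ) + -j = (n + -j) + 1 := by push_cast; ring
  have a3 : (n : ℤ) + (j - 1) = (n + j) - 1 := by ring
  have a4 : (n : ℤ) + -(j - 1) = (n + -j) + 1 := by ring
  have a5 : (n : ℤ) + (j + 1) = (n + j) + 1 := by ring
  have a6 : (n : ℤ) + -(j + 1) = (n + -j) - 1 := by ring
  rw [hp, a1, a2, a3, a4, a5, a6]
  have b1 : Q ^ n * Q ^ (1 - j) = Q * Q ^ ((n : ℤ) + -j) := by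
    rw [← zpow_natCast, ← zpow_add₀ h0.ne', ← zpow_one_add₀ h0.ne']; congr 1; ring
  have b2 : Q ^ n * Q ^ (1 + j) = Q * Q ^ ((n : ℤ) + j) := by
    rw [← zpow_natCast, ← zpow_add₀ h0.ne', ← zpow_one_add₀ h0.ne']; congr 1; ring
  have b3 : Q ^ (2 * n) = Q ^ ((n : ℤ) + j) * Q ^ ((n : ℤ) + -j) := by
    rw [← zpow_natCast, ← zpow_add₀ h0.ne']; congr 1; push_cast; ring
  rw [b1, b2, pow_succ, show 2 * n + 2 = 2 * n + 1 + 1 by ring, pow_succ, pow_succ, b3]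
  generalize (n : ℤ) + j = u
  generalize (n : ℤ) + -j = v
  rw [e_rec h0 h1 u, e_rec h0 h1 v]
  have r1 := e_rec h0 h1 (u + 1)
  have r2 := e_rec h0 h1 (v + 1)
  rw [add_sub_cancel_right, zpow_add_one₀ h0.ne'] at r1 r2
  rw [r1, r2]
  ring

theorem c_tendsto (h0 : 0 < Q) (h1 : Q < 1) (j : ℤ) :
    Filter.Tendsto (fun n : ℕ => c Q n j) Filter.atTop (nhds (P Q)⁻¹) := by
  have h2 : Filter.Tendsto (fun n : ℕ => 2 * n) Filter.atTop Filter.atTop :=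
    Filter.tendsto_atTop_mono (fun n => by simp only [id]; omega) Filter.tendsto_id
  have h3 := (((p_tendsto h0 h1).comp h2).mul (e_tendsto h0 h1 j)).mul (e_tendsto h0 h1 (-j))
  rw [mul_inv_cancel₀ (P_ne h0 h1), one_mul] at h3
  exact h3

theorem c_bound (h0 : 0 < Q) (h1 : Q < 1) (n : ℕ) (j : ℤ) :
    ‖c Q n j‖ ≤ (P Q)⁻¹ * (P Q)⁻¹ := by
  have hp : p Q (2 * n) ≤ 1 := by
    have := p_anti h0 h1 (Nat.zero_le (2 * n))
    simpa [p] using this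
  have hp0 := (p_pos h0 h1 (2 * n)).le
  have e1 := e_nonneg h0 h1 (n + j)
  have e2 := e_nonneg h0 h1 (n + -j)
  have e3 := e_le h0 h1 (n + j)
  have e4 := e_le h0 h1 (n + -j)
  unfold c
  rw [Real.norm_of_nonneg (by positivity)]
  calc _ ≤ 1 * (P Q)⁻¹ * (P Q)⁻¹ := by
        have := (P_pos h0 h1).le
        gcongr
    _ = _ := by ring

/-- General term of the theta series. -/
noncomputable def T (a b : ℂ) (n : ℤ) : ℂ :=
  a ^ ((n * (n + 1)) / 2).toNat * b ^ ((n * (n - 1)) / 2).toNat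

theorem tri (n : ℤ) : ∃ A : ℕ, ∃ B : ℕ, ((n * (n + 1)) / 2).toNat = A ∧
    ((n * (n - 1)) / 2).toNat = B ∧ 2 * (A : ℤ) = n * (n + 1) ∧ 2 * (B : ℤ) = n * (n - 1) := by
  refine ⟨_, _, rfl, rfl, ?_, ?_⟩
  · have h1 : 2 ∣ n * (n + 1) := (Int.even_mul_succ_self n).two_dvd
    have h2 : 0 ≤ n * (n + 1) := by
      rcases le_or_gt 0 n with h | h
      · positivity
      · nlinarith
    omega
  · have h1 : 2 ∣ n * (n - 1) := (Int.even_mul_pred_self n).two_dvd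
    have h2 : 0 ≤ n * (n - 1) := by
      rcases le_or_gt n 0 with h | h
      · nlinarith
      · nlinarith
    omega

theorem T_succ {a b : ℂ} (ha : a ≠ 0) (hb : b ≠ 0) (hab : a * b = Q) (j : ℤ) :
    b * T a b (j + 1) = (Q : ℂ) ^ (1 + j) * T a b j := by
  obtain ⟨A, B, h1, h2, h3, h4⟩ := tri j
  obtain ⟨A', B', h1', h2', h3', h4'⟩ := tri (j + 1)
  unfold T
  rw [h1, h2, h1', h2', ← hab, mul_zpow]
  have hA : (A' : ℤ) = (1 + j) + A := by linarith
  have hB : (B' : ℤ) + 1 = (1 + j) + B := by linarith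
  rw [← zpow_natCast, ← zpow_natCast, ← zpow_natCast, ← zpow_natCast]
  calc _ = a ^ (A' : ℤ) * b ^ ((B' : ℤ) + 1) := by rw [zpow_add_one₀ hb]; ring
    _ = _ := by rw [hA, hB, zpow_add₀ ha, zpow_add₀ hb]; ring

theorem T_pred {a b : ℂ} (ha : a ≠ 0) (hb : b ≠ 0) (hab : a * b = Q) (j : ℤ) :
    a * T a b (j - 1) = (Q : ℂ) ^ (1 - j) * T a b j := by
  obtain ⟨A, B, h1, h2, h3, h4⟩ := tri j
  obtain ⟨A', B', h1', h2', h3', h4'⟩ := tri (j - 1)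
  unfold T
  rw [h1, h2, h1', h2', ← hab, mul_zpow]
  have hA : (A' : ℤ) + 1 = (1 - j) + A := by linarith
  have hB : (B' : ℤ) = (1 - j) + B := by linarith
  rw [← zpow_natCast, ← zpow_natCast, ← zpow_natCast, ← zpow_natCast]
  calc _ = a ^ ((A' : ℤ) + 1) * b ^ (B' : ℤ) := by rw [zpow_add_one₀ ha]; ring
    _ = _ := by rw [hA, hB, zpow_add₀ ha, zpow_add₀ hb]; ring

theorem T_bound {a b : ℂ} {r : ℝ} (hr : r < 1) (ha : ‖a‖ ≤ r) (hb : ‖b‖ ≤ r) (j : ℤ) :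
    ‖T a b j‖ ≤ r ^ j.natAbs := by
  obtain ⟨A, B, h1, h2, h3, h4⟩ := tri j
  have hr0 : 0 ≤ r := (norm_nonneg a).trans ha
  unfold T
  rw [h1, h2, norm_mul, norm_pow, norm_pow]
  calc _ ≤ r ^ A * r ^ B := by gcongr
    _ = r ^ (A + B) := (pow_add _ _ _).symm
    _ ≤ _ := by
      refine pow_le_pow_of_le_one hr0 hr.le ?_
      have h5 : (j.natAbs : ℤ) * j.natAbs = j * j := Int.natAbs_mul_self' j
      have h6 : (A : ℤ) + B = j.natAbs * j.natAbs := by linarith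
      have h7 : A + B = j.natAbs * j.natAbs := by exact_mod_cast h6
      rw [h7]
      exact Nat.le_mul_self _

theorem summ_natAbs {r : ℝ} (hr0 : 0 ≤ r) (hr : r < 1) : Summable fun j : ℤ => r ^ j.natAbs := by
  refine Summable.of_nat_of_neg ?_ ?_ <;> simpa using summable_geometric_of_lt_one hr0 hr

theorem finite_jtp (h0 : 0 < Q) (h1 : Q < 1) {a b : ℂ} (ha : a ≠ 0) (hb : b ≠ 0)
    (hab : a * b = Q) (n : ℕ) :
    HasSum (fun j : ℤ => (c Q n j : ℂ) * T a b j)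
      (∏ k ∈ Finset.range n, ((1 + a * (Q : ℂ) ^ k) * (1 + b * (Q : ℂ) ^ k))) := by
  induction n with
  | zero =>
    have h := hasSum_single (f := fun j : ℤ => (c Q 0 j : ℂ) * T a b j) 0 (fun j hj => by
      have : c Q 0 j = 0 := by
        unfold c e
        rcases lt_or_gt_of_ne hj with h | h
        · rw [if_pos (by simpa using h)]; ring
        · rw [if_pos (show ((0 : ℕ) : ℤ) + -j < 0 by simpa using h)]; ring
      simp [this])
    simpa [c, e, p, T] using h
  | succ n ih =>
    have s1 := (Equiv.subRight (1 : ℤ)).hasSum_iff.2 ih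
    have s2 := (Equiv.addRight (1 : ℤ)).hasSum_iff.2 ih
    have h := ((ih.mul_left (1 + (Q : ℂ) ^ (2 * n + 1))).add
      (s1.mul_left ((Q : ℂ) ^ n * a))).add (s2.mul_left ((Q : ℂ) ^ n * b))
    rw [Finset.prod_range_succ]
    have e1 : (fun j : ℤ => (c Q (n + 1) j : ℂ) * T a b j) = fun j : ℤ =>
        (1 + (Q : ℂ) ^ (2 * n + 1)) * ((c Q n j : ℂ) * T a b j)
        + (Q : ℂ) ^ n * a * ((c Q n (j - 1) : ℂ) * T a b (j - 1))
        + (Q : ℂ) ^ n * b * ((c Q n (j + 1) : ℂ) * T a b (j + 1)) := by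
      funext j
      rw [c_rec h0 h1]
      push_cast
      have t1 := T_succ ha hb hab j
      have t2 := T_pred ha hb hab j
      linear_combination (-(Q : ℂ) ^ n * c Q n (j - 1)) * t2 - (Q : ℂ) ^ n * c Q n (j + 1) * t1
    have e2 : ∀ S : ℂ, S * ((1 + a * (Q : ℂ) ^ n) * (1 + b * (Q : ℂ) ^ n)) =
        (1 + (Q : ℂ) ^ (2 * n + 1)) * S + (Q : ℂ) ^ n * a * S + (Q : ℂ) ^ n * b * S := by
      intro S
      linear_combination S * (Q : ℂ) ^ (2 * n) * hab
    rw [e1, e2]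
    exact h

theorem jtp (h0 : 0 < Q) (h1 : Q < 1) {a b : ℂ} (ha : a ≠ 0) (hb : b ≠ 0)
    (hab : a * b = Q) (ha1 : ‖a‖ < 1) (hb1 : ‖b‖ < 1) :
    Filter.Tendsto
      (fun n => ∏ k ∈ Finset.range n, ((1 + a * (Q : ℂ) ^ k) * (1 + b * (Q : ℂ) ^ k)))
      Filter.atTop (nhds ((P Q : ℂ)⁻¹ * ramTheta a b)) := by
  have hr : max ‖a‖ ‖b‖ < 1 := max_lt ha1 hb1
  have hr0 : 0 ≤ max ‖a‖ ‖b‖ := (norm_nonneg a).trans (le_max_left _ _)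
  have hT := T_bound hr (le_max_left ‖a‖ ‖b‖) (le_max_right ‖a‖ ‖b‖)
  have h := tendsto_tsum_of_dominated_convergence (𝓕 := Filter.atTop)
    (f := fun (n : ℕ) (j : ℤ) => (c Q n j : ℂ) * T a b j)
    (g := fun j => (P Q : ℂ)⁻¹ * T a b j)
    (bound := fun j => ((P Q)⁻¹ * (P Q)⁻¹) * max ‖a‖ ‖b‖ ^ j.natAbs)
    ((summ_natAbs hr0 hr).mul_left _)
    (fun j => by
      refine Filter.Tendsto.mul_const _ ?_
      have := (Complex.continuous_ofReal.tendsto _).comp (c_tendsto h0 h1 j)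
      simpa [Function.comp_def] using this)
    (Filter.Eventually.of_forall fun n j => by
      rw [norm_mul, Complex.norm_real]
      have hb := c_bound h0 h1 n j
      exact mul_le_mul hb (hT j) (norm_nonneg _) ((norm_nonneg _).trans hb))
  rw [tsum_mul_left] at h
  exact h.congr fun n => (finite_jtp h0 h1 ha hb hab n).tsum_eq

/-- `∏ (1 + s q^(2k+1))`. -/
noncomputable def M (s : ℂ) (q : ℝ) : ℂ := ∏' k : ℕ, (1 + s * (q : ℂ) ^ (2 * k + 1))

theorem M_summ {s : ℂ} {q : ℝ} (h0 : 0 < q) (h1 : q < 1) (hs : ‖s‖ = 1) :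
    Summable fun k : ℕ => ‖s * (q : ℂ) ^ (2 * k + 1)‖ := by
  have := (summable_geometric_of_lt_one (by positivity : 0 ≤ q ^ 2)
    (pow_lt_one₀ h0.le h1 two_ne_zero)).mul_right q
  refine this.congr fun k => ?_
  rw [norm_mul, hs, norm_pow, Complex.norm_real, Real.norm_of_nonneg h0.le]
  ring

theorem M_tendsto {s : ℂ} {q : ℝ} (h0 : 0 < q) (h1 : q < 1) (hs : ‖s‖ = 1) :
    Filter.Tendsto (fun n => ∏ k ∈ Finset.range n, (1 + s * (q : ℂ) ^ (2 * k + 1)))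
      Filter.atTop (nhds (M s q)) :=
  (multipliable_one_add_of_summable (M_summ h0 h1 hs)).hasProd.tendsto_prod_nat

theorem M_ne {s : ℂ} {q : ℝ} (h0 : 0 < q) (h1 : q < 1) (hs : ‖s‖ = 1) : M s q ≠ 0 := by
  refine tprod_one_add_ne_zero_of_summable (fun k h => ?_) (M_summ h0 h1 hs)
  have h2 : s * (q : ℂ) ^ (2 * k + 1) = -1 := by linear_combination h
  have h3 := congrArg norm h2
  rw [norm_mul, hs, norm_pow, Complex.norm_real, Real.norm_of_nonneg h0.le, norm_neg, norm_one,
    one_mul] at h3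
  exact (pow_lt_one₀ h0.le h1 (Nat.succ_ne_zero (2 * k))).ne h3

theorem nrm {s : ℂ} {q : ℝ} (h0 : 0 < q) (h1 : q < 1) (hs : ‖s‖ = 1) {m : ℕ} (hm : m ≠ 0) :
    ‖s * (q : ℂ) ^ m‖ < 1 := by
  rw [norm_mul, hs, norm_pow, Complex.norm_real, Real.norm_of_nonneg h0.le, one_mul]
  exact pow_lt_one₀ h0.le h1 hm

theorem jtp' {s : ℂ} {q : ℝ} (h0 : 0 < q) (h1 : q < 1) (hs : s * s = 1) (hs1 : ‖s‖ = 1)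
    {m n : ℕ} (hm : m ≠ 0) (hn : n ≠ 0) :
    Filter.Tendsto
      (fun N => ∏ k ∈ Finset.range N, ((1 + s * (q : ℂ) ^ m * ((q : ℂ) ^ (m + n)) ^ k) *
        (1 + s * (q : ℂ) ^ n * ((q : ℂ) ^ (m + n)) ^ k)))
      Filter.atTop (nhds ((P (q ^ (m + n)) : ℂ)⁻¹ * ramTheta (s * (q : ℂ) ^ m) (s * (q : ℂ) ^ n))) := by
  have hq : (q : ℂ) ≠ 0 := by exact_mod_cast h0.ne'
  have hs0 : s ≠ 0 := by rintro rfl; simp at hs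
  have := jtp (Q := q ^ (m + n)) (by positivity) (pow_lt_one₀ h0.le h1 (by omega))
    (mul_ne_zero hs0 (pow_ne_zero m hq)) (mul_ne_zero hs0 (pow_ne_zero n hq))
    (by push_cast; rw [pow_add]; linear_combination ((q : ℂ) ^ m * (q : ℂ) ^ n) * hs)
    (nrm h0 h1 hs1 hm) (nrm h0 h1 hs1 hn)
  simpa using this

theorem mul_atTop {d : ℕ} (hd : 0 < d) :
    Filter.Tendsto (fun n : ℕ => d * n) Filter.atTop Filter.atTop :=
  Filter.tendsto_atTop_mono (fun n => Nat.le_mul_of_pos_left n hd) Filter.tendsto_id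

theorem psi_eq {s : ℂ} {q : ℝ} (h0 : 0 < q) (h1 : q < 1) (hs : s * s = 1) (hs1 : ‖s‖ = 1) :
    (P (q ^ 4) : ℂ)⁻¹ * ramTheta (s * (q : ℂ) ^ 1) (s * (q : ℂ) ^ 3) = M s q := by
  have h := jtp' h0 h1 hs hs1 (m := 1) (n := 3) (by norm_num) (by norm_num)
  refine tendsto_nhds_unique h (((M_tendsto h0 h1 hs1).comp (mul_atTop two_pos)).congr fun N => ?_)
  simp only [Function.comp]
  induction N with
  | zero => simp
  | succ N ih =>
    rw [Finset.prod_range_succ, ← ih, show 2 * (N + 1) = 2 * N + 1 + 1 by ring,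
      Finset.prod_range_succ, Finset.prod_range_succ]
    ring

theorem gam_eq {s : ℂ} {q : ℝ} (h0 : 0 < q) (h1 : q < 1) (hs : s * s = 1) (hs1 : ‖s‖ = 1) :
    ((P (q ^ 10) : ℂ)⁻¹ * ramTheta (s * (q : ℂ) ^ 1) (s * (q : ℂ) ^ 9)) *
    ((P (q ^ 10) : ℂ)⁻¹ * ramTheta (s * (q : ℂ) ^ 3) (s * (q : ℂ) ^ 7)) * M s (q ^ 5) = M s q := by
  have h := jtp' h0 h1 hs hs1 (m := 1) (n := 9) (by norm_num) (by norm_num)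
  have h' := jtp' h0 h1 hs hs1 (m := 3) (n := 7) (by norm_num) (by norm_num)
  have h5 := M_tendsto (s := s) (q := q ^ 5) (by positivity) (pow_lt_one₀ h0.le h1 (by norm_num)) hs1
  refine tendsto_nhds_unique ((h.mul h').mul h5)
    (((M_tendsto h0 h1 hs1).comp (mul_atTop (d := 5) (by norm_num))).congr fun N => ?_)
  simp only [Function.comp]
  induction N with
  | zero => simp
  | succ N ih =>
    rw [show 5 * (N + 1) = 5 * N + 1 + 1 + 1 + 1 + 1 by ring]
    simp only [Finset.prod_range_succ]
    rw [ih]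
    push_cast
    ring

end JTP

theorem stmt9 (q : ℝ) (hq0 : 0 < q) (hq1 : q < 1) :
    Gamma1 q * Gamma2 q
      = psi (q : ℂ) * psi (-(q : ℂ) ^ 5) / (psi (-(q : ℂ)) * psi ((q : ℂ) ^ 5)) := by
  have k0 : 0 < q ^ 5 := by positivity
  have k1 : q ^ 5 < 1 := pow_lt_one₀ hq0.le hq1 (by norm_num)
  have s1 : (1 : ℂ) * 1 = 1 := by norm_num
  have s2 : (-1 : ℂ) * -1 = 1 := by norm_num
  have n1 : ‖(1 : ℂ)‖ = 1 := by norm_num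
  have n2 : ‖(-1 : ℂ)‖ = 1 := by norm_num
  have a1 := JTP.psi_eq hq0 hq1 s1 n1
  have a2 := JTP.psi_eq hq0 hq1 s2 n2
  have a3 := JTP.psi_eq k0 k1 s1 n1
  have a4 := JTP.psi_eq k0 k1 s2 n2
  have g1 := JTP.gam_eq hq0 hq1 s1 n1
  have g2 := JTP.gam_eq hq0 hq1 s2 n2
  have m1 := JTP.M_ne hq0 hq1 n1
  have m2 := JTP.M_ne hq0 hq1 n2
  have m3 := JTP.M_ne k0 k1 n1
  have m4 := JTP.M_ne k0 k1 n2
  have p1 : (JTP.P (q ^ 4) : ℂ) ≠ 0 := by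
    exact_mod_cast JTP.P_ne (by positivity) (pow_lt_one₀ hq0.le hq1 (by norm_num))
  have p2 : (JTP.P ((q ^ 5) ^ 4) : ℂ) ≠ 0 := by
    exact_mod_cast JTP.P_ne (by positivity) (pow_lt_one₀ k0.le k1 (by norm_num))
  have p3 : (JTP.P (q ^ 10) : ℂ) ≠ 0 := by
    exact_mod_cast JTP.P_ne (by positivity) (pow_lt_one₀ hq0.le hq1 (by norm_num))
  have c1 : psi (q : ℂ) = JTP.P (q ^ 4) * JTP.M 1 q := by
    rw [← a1, mul_inv_cancel_left₀ p1, psi]; congr 1 <;> ring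
  have c2 : psi (-(q : ℂ)) = JTP.P (q ^ 4) * JTP.M (-1) q := by
    rw [← a2, mul_inv_cancel_left₀ p1, psi]; congr 1 <;> ring
  have c3 : psi ((q : ℂ) ^ 5) = JTP.P ((q ^ 5) ^ 4) * JTP.M 1 (q ^ 5) := by
    rw [← a3, mul_inv_cancel_left₀ p2, psi]; push_cast; congr 1 <;> ring
  have c4 : psi (-(q : ℂ) ^ 5) = JTP.P ((q ^ 5) ^ 4) * JTP.M (-1) (q ^ 5) := by
    rw [← a4, mul_inv_cancel_left₀ p2, psi]; push_cast; congr 1 <;> ring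
  rw [c1, c2, c3, c4]
  unfold Gamma1 Gamma2
  simp only [one_mul, neg_mul, pow_one] at g1 g2
  rw [← g1] at m1 ⊢
  rw [← g2] at m2 ⊢
  have d1 := right_ne_zero_of_mul (left_ne_zero_of_mul (left_ne_zero_of_mul m2))
  have d2 := right_ne_zero_of_mul (right_ne_zero_of_mul (left_ne_zero_of_mul m2))
  generalize (JTP.P ((q ^ 5) ^ 4) : ℂ) = X at p2 ⊢
  field_simp
end

section
/- Let q be a real number with 0 < q < 1. Then Γ₁² + Γ₂² = φ(q)⁴/(4·φ(−q^{10})⁴) + φ(q⁵)⁴/(4·φ(−q^{10})⁴) − φ(q)²·φ(q⁵)²/(2·φ(−q^{10})⁴) + 2·ψ(q)·ψ(−q⁵)/(ψ(−q)·ψ(q⁵)). -/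
open Filter Topology

namespace RamAux

noncomputable def tm (a b : ℂ) (n : ℤ) : ℂ :=
  a ^ ((n * (n + 1)) / 2).toNat * b ^ ((n * (n - 1)) / 2).toNat

lemma tri (n : ℤ) : ∃ A B : ℕ, (n * (n + 1)) / 2 = (A : ℤ) ∧ (n * (n - 1)) / 2 = (B : ℤ)
    ∧ (A : ℤ) + B = n ^ 2 ∧ (A : ℤ) - B = n := by
  obtain ⟨c, hc⟩ := Int.even_mul_succ_self n
  obtain ⟨d, hd⟩ := Int.even_mul_pred_self n
  have hc0 : 0 ≤ c := by
    rcases le_or_gt 0 n with h | h <;> nlinarith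
  have hd0 : 0 ≤ d := by
    rcases le_or_gt 1 n with h | h <;> nlinarith
  obtain ⟨A, rfl⟩ := Int.eq_ofNat_of_zero_le hc0
  obtain ⟨B, rfl⟩ := Int.eq_ofNat_of_zero_le hd0
  refine ⟨A, B, by omega, by omega, by nlinarith, by nlinarith⟩

lemma tm_swap (a b : ℂ) (n : ℤ) : tm b a n = tm a b (-n) := by
  unfold tm
  rw [show -n * (-n + 1) = n * (n - 1) by ring, show -n * (-n - 1) = n * (n + 1) by ring, mul_comm]

lemma tm_succ {a b : ℂ} (ha : a ≠ 0) (hb : b ≠ 0) (n : ℤ) :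
    tm a b (n + 1) = a * (a * b) ^ n * tm a b n := by
  obtain ⟨A, B, h1, h2, h3, h4⟩ := tri n
  obtain ⟨A', B', h1', h2', h3', h4'⟩ := tri (n + 1)
  unfold tm
  rw [h1, h2, h1', h2']
  simp only [Int.toNat_natCast]
  have e1 : (A' : ℤ) = A + n + 1 := by nlinarith
  have e2 : (B' : ℤ) = B + n := by nlinarith
  rw [← zpow_natCast a A', ← zpow_natCast b B', e1, e2, mul_zpow, zpow_add₀ ha, zpow_add₀ ha,
    zpow_add₀ hb, zpow_natCast, zpow_natCast, zpow_one]
  ring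

lemma tm_ne {a b : ℂ} (ha : a ≠ 0) (hb : b ≠ 0) (n : ℤ) : tm a b n ≠ 0 :=
  mul_ne_zero (pow_ne_zero _ ha) (pow_ne_zero _ hb)

lemma summ_nat {a b : ℂ} (ha : a ≠ 0) (hb : b ≠ 0) (h : ‖a * b‖ < 1) :
    Summable (fun n : ℕ => ‖tm a b n‖) := by
  refine summable_of_ratio_test_tendsto_lt_one (l := 0) zero_lt_one ?_ ?_
  · exact Eventually.of_forall fun n => norm_ne_zero_iff.2 (tm_ne ha hb _)
  · have h0 : Tendsto (fun n : ℕ => ‖a‖ * ‖a * b‖ ^ n) atTop (𝓝 (‖a‖ * 0)) :=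
      (tendsto_pow_atTop_nhds_zero_of_lt_one (norm_nonneg _) h).const_mul _
    rw [mul_zero] at h0
    refine h0.congr fun n => ?_
    have := norm_ne_zero_iff.2 (tm_ne ha hb n)
    push_cast
    rw [tm_succ ha hb, norm_norm, norm_norm, norm_mul (a * (a * b) ^ (n : ℤ)), norm_mul a (_ ^ _),
      zpow_natCast, norm_pow]
    field_simp

lemma summ {a b : ℂ} (ha : a ≠ 0) (hb : b ≠ 0) (h : ‖a * b‖ < 1) :
    Summable (fun n : ℤ => ‖tm a b n‖) := by
  refine Summable.of_nat_of_neg (summ_nat ha hb h) ?_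
  have := summ_nat hb ha (by rwa [mul_comm])
  exact this.congr fun n => by rw [tm_swap]

/-! Jacobi triple product up to a constant -/

noncomputable def pp (Q : ℂ) (n : ℕ) : ℂ := ∏ i ∈ Finset.range n, (1 - Q ^ (i + 1))

noncomputable def uu (Q : ℂ) (x : ℤ) : ℂ := if 0 ≤ x then (pp Q x.toNat)⁻¹ else 0

lemma one_sub_ne {Q : ℂ} (h : ‖Q‖ < 1) (n : ℕ) : 1 - Q ^ (n + 1) ≠ 0 := by
  intro h0
  have h1 : Q ^ (n + 1) = 1 := (sub_eq_zero.1 h0).symm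
  have h2 : ‖Q‖ ^ (n + 1) < 1 := pow_lt_one₀ (norm_nonneg _) h (by omega)
  rw [← norm_pow, h1] at h2
  simp at h2

lemma uu_rec {Q : ℂ} (h : ‖Q‖ < 1) (x : ℤ) : uu Q (x - 1) = (1 - Q ^ x) * uu Q x := by
  rcases lt_trichotomy x 0 with hx | rfl | hx
  · simp [uu, not_le.2 hx, show ¬ (1 ≤ x) by omega]
  · simp [uu]
  · obtain ⟨n, rfl⟩ : ∃ n : ℕ, x = n + 1 := ⟨(x - 1).toNat, by omega⟩
    have e : ((n : ℤ) + 1).toNat = n + 1 := by omega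
    have := one_sub_ne h n
    rw [uu, uu, if_pos (by omega), if_pos (by omega), e, add_sub_cancel_right, Int.toNat_natCast, pp, pp,
      Finset.prod_range_succ, mul_inv, show (n : ℤ) + 1 = ((n + 1 : ℕ) : ℤ) by push_cast; ring,
      zpow_natCast]
    field_simp

noncomputable def cc (Q : ℂ) (m n : ℕ) (j : ℤ) : ℂ := pp Q (m + n) * uu Q (n + j) * uu Q (m - j)

lemma cc_rec {Q : ℂ} (hQ : Q ≠ 0) (h : ‖Q‖ < 1) (m n : ℕ) (j : ℤ) :
    cc Q (m + 1) n j = cc Q m n j + Q ^ ((m : ℤ) + 1 - j) * cc Q m n (j - 1) := by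
  unfold cc
  have e1 := uu_rec h ((m : ℤ) + 1 - j)
  have e2 := uu_rec h ((n : ℤ) + j)
  rw [show (m : ℤ) + 1 - j - 1 = m - j by ring] at e1
  rw [show (n : ℤ) + (j - 1) = n + j - 1 by ring, show (m : ℤ) - (j - 1) = m + 1 - j by ring, e1, e2,
    show m + 1 + n = (m + n) + 1 by ring, pp, Finset.prod_range_succ, ← pp]
  have e3 : Q ^ (m + n + 1) = Q ^ ((m : ℤ) + 1 - j) * Q ^ ((n : ℤ) + j) := by
    rw [← zpow_add₀ hQ, ← zpow_natCast]; congr 1; push_cast; ring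
  rw [e3]; push_cast; ring

lemma cc_swap (Q : ℂ) (m n : ℕ) (j : ℤ) : cc Q m n (-j) = cc Q n m j := by
  unfold cc
  rw [add_comm m n, sub_neg_eq_add, ← sub_eq_add_neg]; ring

noncomputable def gp (a Q : ℂ) (n : ℕ) : ℂ := ∏ k ∈ Finset.range n, (1 + a * Q ^ k)

lemma fin_step {a b : ℂ} (ha : a ≠ 0) (hb : b ≠ 0) (h : ‖a * b‖ < 1) (m n : ℕ) (S : ℂ)
    (H : HasSum (fun j => cc (a * b) m n j * tm a b j) S) :
    HasSum (fun j => cc (a * b) (m + 1) n j * tm a b j) (S * (1 + a * (a * b) ^ m)) := by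
  have hQ : a * b ≠ 0 := mul_ne_zero ha hb
  have H2 := ((Equiv.subRight (1 : ℤ)).hasSum_iff.2 H).mul_left (a * (a * b) ^ m)
  convert H.add H2 using 1
  · funext j
    have e := tm_succ ha hb (j - 1)
    rw [sub_add_cancel] at e
    simp only [Function.comp, Equiv.subRight_apply]
    rw [cc_rec hQ h, add_mul, e]
    have e3 : (a * b) ^ m = (a * b) ^ ((m : ℤ) + 1 - j) * (a * b) ^ (j - 1) := by
      rw [← zpow_add₀ hQ, ← zpow_natCast]; congr 1; ring
    rw [e3]; ring
  · ring

lemma fin_m {a b : ℂ} (ha : a ≠ 0) (hb : b ≠ 0) (h : ‖a * b‖ < 1) (n : ℕ) (S : ℂ)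
    (H : HasSum (fun j => cc (a * b) 0 n j * tm a b j) S) (m : ℕ) :
    HasSum (fun j => cc (a * b) m n j * tm a b j) (S * gp a (a * b) m) := by
  induction m with
  | zero => simpa [gp] using H
  | succ m ih =>
    have := fin_step ha hb h m n _ ih
    rwa [mul_assoc, gp, ← Finset.prod_range_succ, ← gp] at this

lemma fin_swap {a b : ℂ} (m n : ℕ) (S : ℂ)
    (H : HasSum (fun j => cc (a * b) m n j * tm a b j) S) :
    HasSum (fun j => cc (b * a) n m j * tm b a j) S := by
  have := (Equiv.neg ℤ).hasSum_iff.2 H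
  convert this using 1
  funext j
  simp only [Function.comp, Equiv.neg_apply]
  rw [cc_swap, tm_swap, mul_comm b a]

lemma fin_all {a b : ℂ} (ha : a ≠ 0) (hb : b ≠ 0) (h : ‖a * b‖ < 1) (m n : ℕ) :
    HasSum (fun j => cc (a * b) m n j * tm a b j) (gp b (a * b) n * gp a (a * b) m) := by
  refine fin_m ha hb h n _ ?_ m
  have h' : ‖b * a‖ < 1 := by rwa [mul_comm]
  have h0 : HasSum (fun j => cc (b * a) 0 0 j * tm b a j) 1 := by
    have : cc (b * a) 0 0 0 * tm b a 0 = 1 := by simp [cc, uu, pp, tm]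
    rw [← this]
    refine hasSum_single _ fun j hj => ?_
    have : ¬ (0 ≤ j) ∨ ¬ (0 ≤ -j) := by omega
    rcases this with h | h
    · simp [cc, uu, h]
    · simp only [cc, uu, Nat.cast_zero, zero_sub, if_neg h]; simp
  have h1 := fin_m hb ha h' 0 1 h0 n
  have h2 := fin_swap n 0 _ h1
  rwa [one_mul, mul_comm b a] at h2

noncomputable def GG (a Q : ℂ) : ℂ := ∏' k : ℕ, (1 + a * Q ^ k)

lemma summ_geo (a : ℂ) {Q : ℂ} (h : ‖Q‖ < 1) : Summable (fun k : ℕ => ‖a * Q ^ k‖) := by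
  simp only [norm_mul, norm_pow]
  exact (summable_geometric_of_lt_one (norm_nonneg _) h).mul_left _

lemma gp_tendsto (a : ℂ) {Q : ℂ} (h : ‖Q‖ < 1) : Tendsto (gp a Q) atTop (𝓝 (GG a Q)) :=
  (multipliable_one_add_of_summable (summ_geo a h)).hasProd.tendsto_prod_nat

lemma GG_ne {a Q : ℂ} (h : ‖Q‖ < 1) (ha : ‖a‖ < 1) : GG a Q ≠ 0 := by
  refine tprod_one_add_ne_zero_of_summable (fun k hk => ?_) (summ_geo a h)
  have : ‖a * Q ^ k‖ < 1 := by
    rw [norm_mul, norm_pow]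
    exact mul_lt_one_of_nonneg_of_lt_one_left (norm_nonneg _) ha (pow_le_one₀ (norm_nonneg _) h.le)
  rw [eq_neg_of_add_eq_zero_right hk] at this
  simp at this

lemma pp_eq (Q : ℂ) : pp Q = gp (-Q) Q := by
  funext n; unfold pp gp; refine Finset.prod_congr rfl fun k _ => ?_
  ring

/-- Jacobi triple product, up to a nonzero constant depending on `Q = ab` only. -/
lemma jtp {Q : ℂ} (hQ : ‖Q‖ < 1) : ∃ κ : ℂ, κ ≠ 0 ∧ ∀ a b : ℂ, a ≠ 0 → b ≠ 0 → a * b = Q →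
    ramTheta a b = κ * (GG a Q * GG b Q) := by
  set L := GG (-Q) Q with hL
  have hL0 : L ≠ 0 := GG_ne hQ (by rwa [norm_neg])
  have hp : Tendsto (pp Q) atTop (𝓝 L) := by rw [pp_eq]; exact gp_tendsto _ hQ
  refine ⟨L, hL0, fun a b ha hb hab => ?_⟩
  subst hab
  have hpi : Tendsto (fun n => (pp (a * b) n)⁻¹) atTop (𝓝 L⁻¹) := hp.inv₀ hL0
  obtain ⟨C1, hC1⟩ := hp.norm.bddAbove_range
  obtain ⟨C2, hC2⟩ := hpi.norm.bddAbove_range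
  have hC1' : ∀ n, ‖pp (a * b) n‖ ≤ C1 := fun n => hC1 ⟨n, rfl⟩
  have hC2' : ∀ n, ‖(pp (a * b) n)⁻¹‖ ≤ C2 := fun n => hC2 ⟨n, rfl⟩
  have hC20 : 0 ≤ C2 := (norm_nonneg _).trans (hC2' 0)
  have hC10 : 0 ≤ C1 := (norm_nonneg _).trans (hC1' 0)
  have hu : ∀ x, ‖uu (a * b) x‖ ≤ C2 := by
    intro x; unfold uu; split_ifs
    · exact hC2' _
    · simpa using hC20
  have hulim : ∀ j : ℤ, Tendsto (fun n : ℕ => uu (a * b) (n + j)) atTop (𝓝 L⁻¹) := by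
    intro j
    have h1 : Tendsto (fun n : ℕ => ((n : ℤ) + j).toNat) atTop atTop := by
      refine tendsto_atTop.2 fun B => ?_
      filter_upwards [eventually_ge_atTop (B + j.natAbs)] with n hn
      omega
    refine (hpi.comp h1).congr' ?_
    filter_upwards [eventually_ge_atTop j.natAbs] with n hn
    simp only [Function.comp, uu]
    rw [if_pos (by omega)]
  have hnn : Tendsto (fun n : ℕ => n + n) atTop atTop :=
    tendsto_atTop_mono (fun n => Nat.le_add_left n n) tendsto_id
  have key : Tendsto (fun n : ℕ => ∑' j : ℤ, cc (a * b) n n j * tm a b j) atTop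
      (𝓝 (∑' j : ℤ, L⁻¹ * tm a b j)) := by
    refine tendsto_tsum_of_dominated_convergence (bound := fun j => C1 * C2 * C2 * ‖tm a b j‖)
      ((summ ha hb hQ).mul_left _) ?_ ?_
    · intro j
      refine Tendsto.mul_const _ ?_
      have := ((hp.comp hnn).mul (hulim j)).mul (hulim (-j))
      rw [mul_inv_cancel₀ hL0, one_mul] at this
      exact this
    · refine Eventually.of_forall fun n j => ?_
      rw [norm_mul, cc, norm_mul, norm_mul]
      gcongr
      · exact hC1' _
      · exact hu _
      · exact hu _
  have key2 : Tendsto (fun n : ℕ => ∑' j : ℤ, cc (a * b) n n j * tm a b j) atTop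
      (𝓝 (GG b (a * b) * GG a (a * b))) := by
    refine ((gp_tendsto b hQ).mul (gp_tendsto a hQ)).congr fun n => ?_
    exact (fin_all ha hb hQ n n).tsum_eq.symm
  have e := tendsto_nhds_unique key key2
  rw [tsum_mul_left] at e
  have e2 : ramTheta a b = ∑' j : ℤ, tm a b j := rfl
  rw [e2, mul_comm (GG a _), ← e]
  field_simp

lemma GG_split (a : ℂ) {Q : ℂ} (h : ‖Q‖ < 1) (d : ℕ) (hd : 0 < d) :
    GG a Q = ∏ r ∈ Finset.range d, GG (a * Q ^ r) (Q ^ d) := by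
  have hQd : ‖Q ^ d‖ < 1 := by rw [norm_pow]; exact pow_lt_one₀ (norm_nonneg _) h (by omega)
  have h1 : Tendsto (fun n => ∏ r ∈ Finset.range d, gp (a * Q ^ r) (Q ^ d) n) atTop
      (𝓝 (∏ r ∈ Finset.range d, GG (a * Q ^ r) (Q ^ d))) :=
    tendsto_finsetProd _ fun r _ => gp_tendsto _ hQd
  have h2 : Tendsto (fun n : ℕ => d * n) atTop atTop := tendsto_id.const_mul_atTop' hd
  refine tendsto_nhds_unique (((gp_tendsto a h).comp h2).congr fun n => ?_) h1
  simp only [Function.comp, gp]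
  rw [Finset.prod_comm]
  induction n with
  | zero => simp
  | succ n ih =>
    rw [mul_add, mul_one, Finset.prod_range_add, ih, Finset.prod_range_succ]
    congr 1
    refine Finset.prod_congr rfl fun r _ => ?_
    rw [← pow_mul, pow_add]; ring

/-! Series manipulations -/

noncomputable def st (q ε : ℂ) (m k n : ℤ) : ℂ := ε ^ n * q ^ (m * n ^ 2 + k * n)

lemma tm_st {q ε : ℂ} (hq : q ≠ 0) (he : ε = 1 ∨ ε = -1) (i j : ℕ) (m k : ℤ) (hi : (i : ℤ) = m + k)
    (hj : (j : ℤ) = m - k) (n : ℤ) : tm (ε * q ^ i) (ε * q ^ j) n = st q ε m k n := by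
  obtain ⟨A, B, h1, h2, h3, h4⟩ := tri n
  have he0 : ε ≠ 0 := by rcases he with rfl | rfl <;> simp
  unfold tm st
  rw [h1, h2]
  simp only [Int.toNat_natCast]
  have e1 : ε ^ A * ε ^ B = ε ^ n := by
    have h5 : (A : ℤ) = n + B := by omega
    have h6 : ε ^ B * ε ^ B = 1 := by
      rw [← mul_pow]; rcases he with rfl | rfl <;> simp
    rw [← zpow_natCast ε A, h5, zpow_add₀ he0, zpow_natCast, mul_assoc, h6, mul_one]
  have e2 : (q ^ i) ^ A * (q ^ j) ^ B = q ^ (m * n ^ 2 + k * n) := by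
    rw [← pow_mul, ← pow_mul, ← pow_add, ← zpow_natCast]
    congr 1
    push_cast
    rw [hi, hj, ← h3]
    linear_combination k * h4
  rw [mul_pow, mul_pow, ← e1, ← e2]; ring

lemma th_eq {q ε : ℂ} (hq : q ≠ 0) (hq1 : ‖q‖ < 1) (he : ε = 1 ∨ ε = -1) (i j : ℕ) (m k : ℤ)
    (hi : (i : ℤ) = m + k) (hj : (j : ℤ) = m - k) (hij : 0 < i + j) (a b : ℂ)
    (ha : a = ε * q ^ i) (hb : b = ε * q ^ j) :
    ramTheta a b = ∑' n, st q ε m k n ∧ Summable (fun n => ‖st q ε m k n‖) := by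
  subst ha hb
  have he0 : ε ≠ 0 := by rcases he with rfl | rfl <;> simp
  have hee : ε * ε = 1 := by rcases he with rfl | rfl <;> simp
  constructor
  · exact tsum_congr fun n => tm_st hq he i j m k hi hj n
  · have := summ (a := ε * q ^ i) (b := ε * q ^ j) (mul_ne_zero he0 (pow_ne_zero _ hq))
      (mul_ne_zero he0 (pow_ne_zero _ hq)) (by
        rw [show ε * q ^ i * (ε * q ^ j) = (ε * ε) * q ^ (i + j) by rw [pow_add]; ring, hee, one_mul,
          norm_pow]
        exact pow_lt_one₀ (norm_nonneg _) hq1 (by omega))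
    exact this.congr fun n => by rw [tm_st hq he i j m k hi hj n]

lemma neg_pow_even {s t : ℤ} (h : Even (s - t)) : (-1 : ℂ) ^ s = (-1) ^ t := by
  have : s = t + (s - t) := by ring
  rw [this, zpow_add₀ (by simp), h.neg_one_zpow, mul_one]

lemma neg_pow_odd {s t : ℤ} (h : Odd (s - t)) : (-1 : ℂ) ^ s = -(-1) ^ t := by
  have : s = t + (s - t) := by ring
  rw [this, zpow_add₀ (by simp), h.neg_one_zpow]; ring

/-- `f(a,b) f(-a,-b) = f(-a²,-b²) φ(-ab)`. -/
lemma ser_A {q : ℂ} (hq : q ≠ 0) (m k : ℤ)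
    (h1 : Summable (fun n => ‖st q 1 m k n‖)) (h2 : Summable (fun n => ‖st q (-1) m k n‖))
    (h3 : Summable (fun n => ‖st q (-1) (2 * m) (2 * k) n‖))
    (h4 : Summable (fun n => ‖st q (-1) (2 * m) 0 n‖)) :
    (∑' n, st q 1 m k n) * (∑' n, st q (-1) m k n)
      = (∑' n, st q (-1) (2 * m) (2 * k) n) * ∑' n, st q (-1) (2 * m) 0 n := by
  rw [tsum_mul_tsum_of_summable_norm h1 h2, tsum_mul_tsum_of_summable_norm h3 h4]
  have hS := summable_mul_of_summable_norm h1 h2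
  set F : ℤ × ℤ → ℂ := fun z => st q 1 m k z.1 * st q (-1) m k z.2 with hF
  have hsw : ∑' z : ℤ × ℤ, F z.swap = ∑' z, F z := (Equiv.prodComm ℤ ℤ).tsum_eq F
  have hSs : Summable (fun z : ℤ × ℤ => F z.swap) := (Equiv.prodComm ℤ ℤ).summable_iff.2 hS
  have e1 : ∑' z : ℤ × ℤ, (F z + F z.swap) = 2 * ∑' z, F z := by
    rw [Summable.tsum_add hS hSs, hsw]; ring
  let g : ℤ × ℤ → ℤ × ℤ := fun z => (z.1 + z.2, z.1 - z.2)
  have hg : Function.Injective g := by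
    rintro ⟨a, b⟩ ⟨c, d⟩ h
    simp only [g, Prod.mk.injEq] at h ⊢
    omega
  have e2 : ∑' z, (F (g z) + F (g z).swap) = ∑' z : ℤ × ℤ, (F z + F z.swap) := by
    refine hg.tsum_eq (f := fun z : ℤ × ℤ => F z + F z.swap) ?_
    rintro ⟨x, y⟩ hxy
    by_contra hc
    apply hxy
    have ho : Odd (x - y) := by
      rw [← Int.not_even_iff_odd]
      rintro ⟨c, hc'⟩
      exact hc ⟨(x - c, c), by simp only [g, Prod.mk.injEq]; omega⟩
    simp only [hF, st, Prod.swap, one_zpow, neg_pow_odd ho]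
    ring
  have e3 : ∀ z, F (g z) + F (g z).swap
      = 2 * (st q (-1) (2 * m) (2 * k) z.1 * st q (-1) (2 * m) 0 z.2) := by
    rintro ⟨s, t⟩
    have p1 : (-1 : ℂ) ^ (s - t) = (-1) ^ (s + t) := neg_pow_even ⟨-t, by ring⟩
    simp only [hF, st, g, Prod.swap, one_zpow, one_mul, p1]
    have p2 : q ^ (m * (s + t) ^ 2 + k * (s + t)) * q ^ (m * (s - t) ^ 2 + k * (s - t))
        = q ^ (2 * m * s ^ 2 + 2 * k * s) * q ^ (2 * m * t ^ 2 + 0 * t) := by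
      rw [← zpow_add₀ hq, ← zpow_add₀ hq]; congr 1; ring
    have p3 : (-1 : ℂ) ^ (s + t) = (-1) ^ s * (-1) ^ t := zpow_add₀ (by simp) _ _
    rw [p3]
    linear_combination 2 * (-1 : ℂ) ^ s * (-1) ^ t * p2
  simp only [e3] at e2
  rw [e1, tsum_mul_left] at e2
  exact (mul_left_cancel₀ two_ne_zero e2).symm

lemma ser_B {q : ℂ} (hq : q ≠ 0)
    (h1 : Summable (fun n => ‖st q 1 5 4 n‖)) (h2 : Summable (fun n => ‖st q (-1) 5 2 n‖))
    (h1' : Summable (fun n => ‖st q (-1) 5 4 n‖)) (h2' : Summable (fun n => ‖st q 1 5 2 n‖))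
    (h3 : Summable (fun n => ‖st q (-1) 10 (-4) n‖))
    (h4 : Summable (fun n => ‖st q (-1) 10 (-8) n‖)) :
    (∑' n, st q 1 5 4 n) * (∑' n, st q (-1) 5 2 n) - (∑' n, st q (-1) 5 4 n) * (∑' n, st q 1 5 2 n)
      = 2 * q * ((∑' n, st q (-1) 10 (-4) n) * ∑' n, st q (-1) 10 (-8) n) := by
  rw [tsum_mul_tsum_of_summable_norm h1 h2, tsum_mul_tsum_of_summable_norm h1' h2',
    tsum_mul_tsum_of_summable_norm h3 h4]
  have hs1 := summable_mul_of_summable_norm h1 h2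
  have hs2 := summable_mul_of_summable_norm h1' h2'
  rw [← hs1.tsum_sub hs2, ← tsum_mul_left]
  let g : ℤ × ℤ → ℤ × ℤ := fun z => (z.1 + z.2 - 1, z.1 - z.2)
  have hg : Function.Injective g := by
    rintro ⟨a, b⟩ ⟨c, d⟩ h
    simp only [g, Prod.mk.injEq] at h ⊢
    omega
  rw [← hg.tsum_eq]
  · refine tsum_congr ?_
    rintro ⟨s, t⟩
    have p1 : (-1 : ℂ) ^ (s - t) = (-1) ^ (s + t) := neg_pow_even ⟨-t, by ring⟩
    have p0 : (-1 : ℂ) ^ (s + t - 1) = -(-1) ^ (s + t) := neg_pow_odd ⟨-1, by ring⟩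
    simp only [st, g, one_zpow, one_mul, p1, p0]
    have p2 : q ^ (5 * (s + t - 1) ^ 2 + 4 * (s + t - 1)) * q ^ (5 * (s - t) ^ 2 + 2 * (s - t))
        = q * q ^ (10 * s ^ 2 + -4 * s) * q ^ (10 * t ^ 2 + -8 * t) := by
      rw [← zpow_add₀ hq, ← zpow_one_add₀ hq, ← zpow_add₀ hq]; congr 1; ring
    have p3 : (-1 : ℂ) ^ (s + t) = (-1) ^ s * (-1) ^ t := zpow_add₀ (by simp) _ _
    rw [p3]
    linear_combination 2 * (-1 : ℂ) ^ s * (-1) ^ t * p2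
  · rintro ⟨x, y⟩ hxy
    by_contra hc
    apply hxy
    have ho : Even (x - y) := by
      rw [← Int.not_odd_iff_even]
      rintro ⟨c, hc'⟩
      exact hc ⟨(x - c, c + 1 - 0), by simp only [g, Prod.mk.injEq]; omega⟩
    simp only [st, one_zpow, neg_pow_even ho]
    ring

lemma class_sum (F : ℤ × ℤ → ℂ) (r : ℤ) (g : ℤ × ℤ → ℤ × ℤ) (hg : Function.Injective g)
    (hr : ∀ z, ((g z).1 + 2 * (g z).2) % 5 = r)
    (hs : ∀ z : ℤ × ℤ, (z.1 + 2 * z.2) % 5 = r → ∃ w, g w = z) :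
    ∑' z : ℤ × ℤ, (if (z.1 + 2 * z.2) % 5 = r then F z else 0) = ∑' w, F (g w) := by
  rw [← hg.tsum_eq (f := fun z : ℤ × ℤ => if (z.1 + 2 * z.2) % 5 = r then F z else 0)]
  · exact tsum_congr fun w => if_pos (hr w)
  · intro z hz
    by_contra hc
    exact hz (if_neg fun h => hc (hs z h))

lemma ser_C {q : ℂ} (hq : q ≠ 0)
    (h1 : Summable (fun n => ‖st q 1 1 0 n‖)) (h5 : Summable (fun n => ‖st q 1 5 0 n‖))
    (ha : Summable (fun n => ‖st q 1 5 4 n‖)) (hb : Summable (fun n => ‖st q 1 5 2 n‖)) :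
    (∑' n, st q 1 1 0 n) ^ 2 - (∑' n, st q 1 5 0 n) ^ 2
      = 4 * q * ((∑' n, st q 1 5 4 n) * ∑' n, st q 1 5 2 n) := by
  rw [sq, sq, tsum_mul_tsum_of_summable_norm h1 h1, tsum_mul_tsum_of_summable_norm h5 h5,
    tsum_mul_tsum_of_summable_norm ha hb]
  have hS := summable_mul_of_summable_norm h1 h1
  set F : ℤ × ℤ → ℂ := fun z => st q 1 1 0 z.1 * st q 1 1 0 z.2 with hF
  have hFv : ∀ x y, F (x, y) = q ^ (x ^ 2 + y ^ 2) := by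
    intro x y
    simp only [hF, st, one_zpow, one_mul, zero_mul, add_zero]
    rw [← zpow_add₀ hq]
  have hI : ∀ r : ℤ, Summable (fun z : ℤ × ℤ => if (z.1 + 2 * z.2) % 5 = r then F z else 0) := by
    intro r
    refine (hS.indicator {z : ℤ × ℤ | (z.1 + 2 * z.2) % 5 = r}).congr fun z => ?_
    simp only [Set.indicator_apply, Set.mem_setOf_eq]
  have hdec : ∑' z, F z = ∑' z : ℤ × ℤ, ((((
      (if (z.1 + 2 * z.2) % 5 = 0 then F z else 0) + (if (z.1 + 2 * z.2) % 5 = 1 then F z else 0))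
      + (if (z.1 + 2 * z.2) % 5 = 2 then F z else 0)) + (if (z.1 + 2 * z.2) % 5 = 3 then F z else 0))
      + (if (z.1 + 2 * z.2) % 5 = 4 then F z else 0)) := by
    refine tsum_congr fun z => ?_
    have : (z.1 + 2 * z.2) % 5 = 0 ∨ (z.1 + 2 * z.2) % 5 = 1 ∨ (z.1 + 2 * z.2) % 5 = 2 ∨
      (z.1 + 2 * z.2) % 5 = 3 ∨ (z.1 + 2 * z.2) % 5 = 4 := by omega
    rcases this with h | h | h | h | h <;> simp [h]
  rw [Summable.tsum_add ((((hI 0).add (hI 1)).add (hI 2)).add (hI 3)) (hI 4),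
    Summable.tsum_add (((hI 0).add (hI 1)).add (hI 2)) (hI 3),
    Summable.tsum_add ((hI 0).add (hI 1)) (hI 2), Summable.tsum_add (hI 0) (hI 1)] at hdec
  have c0 := class_sum F 0 (fun z => (2 * z.1 + z.2, -z.1 + 2 * z.2))
    (by rintro ⟨a, b⟩ ⟨c, d⟩ h; simp only [Prod.mk.injEq] at h ⊢; omega)
    (by rintro ⟨a, b⟩; simp only; omega)
    (by rintro ⟨a, b⟩ h; exact ⟨((2 * a - b) / 5, (a + 2 * b) / 5), by
          simp only [Prod.mk.injEq] at h ⊢; omega⟩)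
  have c1 := class_sum F 1 (fun z => (2 * z.1 + z.2 + 1, 2 * z.2 - z.1))
    (by rintro ⟨a, b⟩ ⟨c, d⟩ h; simp only [Prod.mk.injEq] at h ⊢; omega)
    (by rintro ⟨a, b⟩; simp only; omega)
    (by rintro ⟨a, b⟩ h; exact ⟨((2 * a - b) / 5, (a + 2 * b) / 5), by
          simp only [Prod.mk.injEq] at h ⊢; omega⟩)
  have c2 := class_sum F 2 (fun z => (-(2 * z.2 - z.1), 2 * z.1 + z.2 + 1))
    (by rintro ⟨a, b⟩ ⟨c, d⟩ h; simp only [Prod.mk.injEq] at h ⊢; omega)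
    (by rintro ⟨a, b⟩; simp only; omega)
    (by rintro ⟨a, b⟩ h; exact ⟨((2 * b + a) / 5, (b - 2 * a) / 5), by
          simp only [Prod.mk.injEq] at h ⊢; omega⟩)
  have c3 := class_sum F 3 (fun z => (2 * z.2 - z.1, -(2 * z.1 + z.2 + 1)))
    (by rintro ⟨a, b⟩ ⟨c, d⟩ h; simp only [Prod.mk.injEq] at h ⊢; omega)
    (by rintro ⟨a, b⟩; simp only; omega)
    (by rintro ⟨a, b⟩ h; exact ⟨((-2 * b - a) / 5, (2 * a - b) / 5), by
          simp only [Prod.mk.injEq] at h ⊢; omega⟩)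
  have c4 := class_sum F 4 (fun z => (-(2 * z.1 + z.2 + 1), -(2 * z.2 - z.1)))
    (by rintro ⟨a, b⟩ ⟨c, d⟩ h; simp only [Prod.mk.injEq] at h ⊢; omega)
    (by rintro ⟨a, b⟩; simp only; omega)
    (by rintro ⟨a, b⟩ h; exact ⟨((b - 2 * a) / 5, (-a - 2 * b) / 5), by
          simp only [Prod.mk.injEq] at h ⊢; omega⟩)
  have v0 : ∀ z : ℤ × ℤ, F (2 * z.1 + z.2, -z.1 + 2 * z.2) = st q 1 5 0 z.1 * st q 1 5 0 z.2 := by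
    rintro ⟨a, b⟩
    simp only [hFv, st, one_zpow, one_mul]
    rw [← zpow_add₀ hq]; congr 1; ring
  have v : ∀ z : ℤ × ℤ, ∀ x y : ℤ, x ^ 2 + y ^ 2 = (2 * z.1 + z.2 + 1) ^ 2 + (2 * z.2 - z.1) ^ 2 →
      F (x, y) = q * (st q 1 5 4 z.1 * st q 1 5 2 z.2) := by
    rintro ⟨a, b⟩ x y h
    simp only [hFv, st, one_zpow, one_mul]
    rw [← zpow_add₀ hq, ← zpow_one_add₀ hq, h]; congr 1; ring
  rw [tsum_congr v0] at c0
  rw [tsum_congr fun z => v z _ _ (by ring), tsum_mul_left] at c1 c2 c3 c4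
  rw [hdec, c0, c1, c2, c3, c4]
  ring

lemma final_alg {q : ℂ} {a1 a2 b1 b2 p1 p5 F s1 s2 s3 s4 u v : ℂ} (hb1 : b1 ≠ 0) (hb2 : b2 ≠ 0)
    (hF : F ≠ 0) (hs3 : s3 ≠ 0) (hs4 : s4 ≠ 0)
    (hA1 : a1 * b1 = u * F) (hA2 : a2 * b2 = v * F)
    (hB : a1 * b2 - b1 * a2 = 2 * q * (v * u))
    (hC : p1 ^ 2 - p5 ^ 2 = 4 * q * (a1 * a2))
    (hD : a1 * a2 * (s3 * s4) = b1 * b2 * (s1 * s2)) :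
    (a1 / b1) ^ 2 + (a2 / b2) ^ 2 = p1 ^ 4 / (4 * F ^ 4) + p5 ^ 4 / (4 * F ^ 4)
      - p1 ^ 2 * p5 ^ 2 / (2 * F ^ 4) + 2 * s1 * s2 / (s3 * s4) := by
  have h1 : a1 / b1 - a2 / b2 = 2 * q * (a1 * a2) / F ^ 2 := by
    have hu : u = a1 * b1 / F := by field_simp; exact hA1.symm
    have hv : v = a2 * b2 / F := by field_simp; exact hA2.symm
    rw [hu, hv] at hB
    field_simp at hB ⊢
    linear_combination hB
  have h2 : (a1 / b1) * (a2 / b2) = s1 * s2 / (s3 * s4) := by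
    field_simp
    linear_combination hD
  have h3 : p1 ^ 4 / (4 * F ^ 4) + p5 ^ 4 / (4 * F ^ 4)
      - p1 ^ 2 * p5 ^ 2 / (2 * F ^ 4) = (p1 ^ 2 - p5 ^ 2) ^ 2 / (4 * F ^ 4) := by
    field_simp; ring
  have h4 : 2 * s1 * s2 / (s3 * s4) = 2 * ((a1 / b1) * (a2 / b2)) := by rw [h2]; ring
  rw [h3, h4, hC, show (4 * q * (a1 * a2)) ^ 2 / (4 * F ^ 4) = (2 * q * (a1 * a2) / F ^ 2) ^ 2 by
    field_simp; ring, ← h1]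
  ring

lemma th_symm (q ε : ℂ) (he : ε = 1 ∨ ε = -1) (m k : ℤ) :
    ∑' n, st q ε m (-k) n = ∑' n, st q ε m k n := by
  rw [← (Equiv.neg ℤ).tsum_eq]
  refine tsum_congr fun n => ?_
  have : ε ^ (-n) = ε ^ n := by 
    have h1 : ε⁻¹ = ε := by rcases he with rfl | rfl <;> norm_num
    rw [zpow_neg, ← inv_zpow, h1]
  simp only [Equiv.neg_apply, st, this]
  congr 2; ring

lemma prod_facts {q : ℂ} (hq : q ≠ 0) (hq1 : ‖q‖ < 1) :
    ∃ κ μ : ℂ, κ ≠ 0 ∧ μ ≠ 0 ∧ ∀ ε : ℂ, ε = 1 ∨ ε = -1 →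
      ramTheta (ε * q ^ 1) (ε * q ^ 9) ≠ 0 ∧ ramTheta (ε * q ^ 3) (ε * q ^ 7) ≠ 0 ∧
      psi (ε * q) = μ * GG (ε * q) (q ^ 2) ∧ GG (ε * q) (q ^ 2) ≠ 0 ∧
      ramTheta (ε * q ^ 1) (ε * q ^ 9) * ramTheta (ε * q ^ 3) (ε * q ^ 7)
        * GG (ε * q ^ 5) (q ^ 10) = κ * GG (ε * q) (q ^ 2) := by
  have hn : ∀ n : ℕ, n ≠ 0 → ‖q ^ n‖ < 1 := fun n h => by
    rw [norm_pow]; exact pow_lt_one₀ (norm_nonneg _) hq1 h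
  obtain ⟨κ, hκ, K⟩ := jtp (hn 10 (by norm_num))
  obtain ⟨μ, hμ, M⟩ := jtp (hn 4 (by norm_num))
  refine ⟨κ ^ 2, μ, pow_ne_zero _ hκ, hμ, fun ε he => ?_⟩
  have he0 : ε ≠ 0 := by rcases he with rfl | rfl <;> simp
  have hee : ε * ε = 1 := by rcases he with rfl | rfl <;> simp
  have hen : ‖ε‖ = 1 := by rcases he with rfl | rfl <;> simp
  have hz : ∀ n : ℕ, ε * q ^ n ≠ 0 := fun n => mul_ne_zero he0 (pow_ne_zero _ hq)
  have hm : ∀ i j : ℕ, ε * q ^ i * (ε * q ^ j) = q ^ (i + j) := fun i j => by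
    rw [pow_add]; linear_combination q ^ i * q ^ j * hee
  have hg : ∀ i j : ℕ, i ≠ 0 → j ≠ 0 → GG (ε * q ^ i) (q ^ j) ≠ 0 := fun i j hi hj =>
    GG_ne (hn j hj) (by rw [norm_mul, hen, one_mul]; exact hn i hi)
  have k1 := K _ _ (hz 1) (hz 9) (hm 1 9)
  have k3 := K _ _ (hz 3) (hz 7) (hm 3 7)
  have s2 : GG (ε * q) (q ^ 2) = GG (ε * q ^ 1) (q ^ 4) * GG (ε * q ^ 3) (q ^ 4) := by
    rw [GG_split (ε * q) (hn 2 (by norm_num)) 2 (by norm_num)]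
    simp only [Finset.prod_range_succ, Finset.prod_range_zero, one_mul]
    ring_nf
  have s5 : GG (ε * q) (q ^ 2) = GG (ε * q ^ 1) (q ^ 10) * GG (ε * q ^ 3) (q ^ 10)
      * GG (ε * q ^ 5) (q ^ 10) * GG (ε * q ^ 7) (q ^ 10) * GG (ε * q ^ 9) (q ^ 10) := by
    rw [GG_split (ε * q) (hn 2 (by norm_num)) 5 (by norm_num)]
    simp only [Finset.prod_range_succ, Finset.prod_range_zero, one_mul]
    ring_nf
  refine ⟨?_, ?_, ?_, ?_, ?_⟩
  · rw [k1]; exact mul_ne_zero hκ (mul_ne_zero (hg _ _ (by norm_num) (by norm_num))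
      (hg _ _ (by norm_num) (by norm_num)))
  · rw [k3]; exact mul_ne_zero hκ (mul_ne_zero (hg _ _ (by norm_num) (by norm_num))
      (hg _ _ (by norm_num) (by norm_num)))
  · rw [s2, ← M _ _ (hz 1) (hz 3) (hm 1 3), psi, pow_one]
    congr 1
    linear_combination ε * q ^ 3 * hee
  · simpa using hg 1 2 (by norm_num) (by norm_num)
  · rw [k1, k3, s5]; ring

lemma phi_ne {q : ℂ} (hq : q ≠ 0) (hq1 : ‖q‖ < 1) : phi (-q) ≠ 0 := by
  have h2 : ‖q ^ 2‖ < 1 := by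
    rw [norm_pow]; exact pow_lt_one₀ (norm_nonneg _) hq1 (by norm_num)
  obtain ⟨κ, hκ, K⟩ := jtp h2
  rw [phi, K _ _ (neg_ne_zero.2 hq) (neg_ne_zero.2 hq) (by ring)]
  have := GG_ne h2 (a := -q) (by rwa [norm_neg])
  exact mul_ne_zero hκ (mul_ne_zero this this)

lemma main {q : ℂ} (hq : q ≠ 0) (hq1 : ‖q‖ < 1) :
    (ramTheta q (q ^ 9) / ramTheta (-q) (-q ^ 9)) ^ 2
      + (ramTheta (q ^ 3) (q ^ 7) / ramTheta (-q ^ 3) (-q ^ 7)) ^ 2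
      = phi q ^ 4 / (4 * phi (-q ^ 10) ^ 4)
        + phi (q ^ 5) ^ 4 / (4 * phi (-q ^ 10) ^ 4)
        - phi q ^ 2 * phi (q ^ 5) ^ 2 / (2 * phi (-q ^ 10) ^ 4)
        + 2 * psi q * psi (-q ^ 5) / (psi (-q) * psi (q ^ 5)) := by
  have hn : ∀ n : ℕ, n ≠ 0 → ‖q ^ n‖ < 1 := fun n h => by
    rw [norm_pow]; exact pow_lt_one₀ (norm_nonneg _) hq1 h
  have l : (1 : ℂ) = 1 ∨ (1 : ℂ) = -1 := Or.inl rfl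
  have r : (-1 : ℂ) = 1 ∨ (-1 : ℂ) = -1 := Or.inr rfl
  obtain ⟨a1, ha1⟩ := th_eq hq hq1 l 1 9 5 (-4) (by norm_num) (by norm_num) (by norm_num) q (q ^ 9)
    (by ring) (by ring)
  obtain ⟨-, ha1'⟩ := th_eq hq hq1 l 9 1 5 4 (by norm_num) (by norm_num) (by norm_num) (q ^ 9) q
    (by ring) (by ring)
  obtain ⟨b1, hb1⟩ := th_eq hq hq1 r 1 9 5 (-4) (by norm_num) (by norm_num) (by norm_num) (-q) (-q ^ 9)
    (by ring) (by ring)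
  obtain ⟨-, hb1'⟩ := th_eq hq hq1 r 9 1 5 4 (by norm_num) (by norm_num) (by norm_num) (-q ^ 9) (-q)
    (by ring) (by ring)
  obtain ⟨a2, ha2⟩ := th_eq hq hq1 l 3 7 5 (-2) (by norm_num) (by norm_num) (by norm_num)
    (q ^ 3) (q ^ 7) (by ring) (by ring)
  obtain ⟨-, ha2'⟩ := th_eq hq hq1 l 7 3 5 2 (by norm_num) (by norm_num) (by norm_num)
    (q ^ 7) (q ^ 3) (by ring) (by ring)
  obtain ⟨b2, hb2⟩ := th_eq hq hq1 r 3 7 5 (-2) (by norm_num) (by norm_num) (by norm_num)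
    (-q ^ 3) (-q ^ 7) (by ring) (by ring)
  obtain ⟨-, hb2'⟩ := th_eq hq hq1 r 7 3 5 2 (by norm_num) (by norm_num) (by norm_num)
    (-q ^ 7) (-q ^ 3) (by ring) (by ring)
  obtain ⟨-, hu⟩ := th_eq hq hq1 r 2 18 10 (-8) (by norm_num) (by norm_num) (by norm_num)
    (-q ^ 2) (-q ^ 18) (by ring) (by ring)
  obtain ⟨-, hu'⟩ := th_eq hq hq1 r 18 2 10 8 (by norm_num) (by norm_num) (by norm_num)
    (-q ^ 18) (-q ^ 2) (by ring) (by ring)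
  obtain ⟨-, hv⟩ := th_eq hq hq1 r 6 14 10 (-4) (by norm_num) (by norm_num) (by norm_num)
    (-q ^ 6) (-q ^ 14) (by ring) (by ring)
  obtain ⟨-, hv'⟩ := th_eq hq hq1 r 14 6 10 4 (by norm_num) (by norm_num) (by norm_num)
    (-q ^ 14) (-q ^ 6) (by ring) (by ring)
  obtain ⟨F, hF⟩ := th_eq hq hq1 r 10 10 10 0 (by norm_num) (by norm_num) (by norm_num)
    (-q ^ 10) (-q ^ 10) (by ring) (by ring)
  obtain ⟨p1, hp1⟩ := th_eq hq hq1 l 1 1 1 0 (by norm_num) (by norm_num) (by norm_num)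
    q q (by ring) (by ring)
  obtain ⟨p5, hp5⟩ := th_eq hq hq1 l 5 5 5 0 (by norm_num) (by norm_num) (by norm_num)
    (q ^ 5) (q ^ 5) (by ring) (by ring)
  rw [th_symm _ _ l] at a1 a2
  rw [th_symm _ _ r] at b1 b2
  have A1 := ser_A hq 5 4 ha1' hb1' hu' hF
  have A2 := ser_A hq 5 2 ha2' hb2' hv' hF
  have B := ser_B hq ha1' hb2' hb1' ha2' hv hu
  have C := ser_C hq hp1 hp5 ha1' ha2'
  norm_num only at A1 A2
  rw [th_symm _ _ r, th_symm _ _ r, ← a1, ← a2, ← b1, ← b2] at B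
  rw [← a1, ← b1, ← F] at A1
  rw [← a2, ← b2, ← F] at A2
  rw [← a1, ← a2, ← p1, ← p5] at C
  obtain ⟨κ, μ, hκ, hμ, K⟩ := prod_facts hq hq1
  obtain ⟨κ5, μ5, hκ5, hμ5, K5⟩ := prod_facts (pow_ne_zero 5 hq) (hn 5 (by norm_num))
  obtain ⟨-, -, e1, g1, f1⟩ := K 1 l
  obtain ⟨n1, n2, e2, g2, f2⟩ := K (-1) r
  obtain ⟨-, -, e3, g3, -⟩ := K5 1 l
  obtain ⟨-, -, e4, g4, -⟩ := K5 (-1) r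
  simp only [one_mul, pow_one, neg_mul, ← pow_mul, Nat.reduceMul] at e1 e2 e3 e4 f1 f2 n1 n2 g1 g2 g3 g4
  have hs2 : psi (-q) ≠ 0 := by rw [e2]; exact mul_ne_zero hμ g2
  have hs3 : psi (q ^ 5) ≠ 0 := by rw [e3]; exact mul_ne_zero hμ5 g3
  refine final_alg n1 n2 (phi_ne (pow_ne_zero 10 hq) (hn 10 (by norm_num))) hs2 hs3 A1 A2 B C ?_
  rw [e1, e2, e3, e4]
  apply mul_left_cancel₀ hκ
  linear_combination (μ * μ5 * κ * GG (-q) (q ^ 2)) * f1 - (μ * μ5 * κ * GG q (q ^ 2)) * f2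

end RamAux

theorem stmt10 (q : ℝ) (hq0 : 0 < q) (hq1 : q < 1) :
    Gamma1 q ^ 2 + Gamma2 q ^ 2
      = phi (q : ℂ) ^ 4 / (4 * phi (-(q : ℂ) ^ 10) ^ 4)
        + phi ((q : ℂ) ^ 5) ^ 4 / (4 * phi (-(q : ℂ) ^ 10) ^ 4)
        - phi (q : ℂ) ^ 2 * phi ((q : ℂ) ^ 5) ^ 2 / (2 * phi (-(q : ℂ) ^ 10) ^ 4)
        + 2 * psi (q : ℂ) * psi (-(q : ℂ) ^ 5) / (psi (-(q : ℂ)) * psi ((q : ℂ) ^ 5)) := by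
  refine RamAux.main (by exact_mod_cast hq0.ne') ?_
  rw [Complex.norm_real, Real.norm_eq_abs, abs_of_pos hq0]
  exact hq1
end

section
/- Let q be a real number with 0 < q < 1. Then Ω₁·Ω₂ = q·φ(−q^{10})·ψ(−q) / (φ(−q)·ψ(q⁵)). -/
lemma summable_geo (a p : ℂ) (hp : ‖p‖ < 1) : Summable fun k : ℕ => ‖-(a * p ^ k)‖ := by
  simp only [norm_neg, norm_mul, norm_pow]
  exact (summable_geometric_of_lt_one (norm_nonneg _) hp).mul_left _

lemma mult_Q (a p : ℂ) (hp : ‖p‖ < 1) : Multipliable fun k : ℕ => (1 - a * p ^ k) := by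
  simpa [sub_eq_add_neg] using multipliable_one_add_of_summable (summable_geo a p hp)

lemma tendsto_Q (a p : ℂ) (hp : ‖p‖ < 1) :
    Filter.Tendsto (fun N => ∏ k ∈ Finset.range N, (1 - a * p ^ k)) Filter.atTop
      (nhds (qPochInf a p)) :=
  (mult_Q a p hp).hasProd.tendsto_prod_nat

lemma one_sub_ne (a p : ℂ) (ha : ‖a‖ < 1) (hp : ‖p‖ < 1) (k : ℕ) : 1 - a * p ^ k ≠ 0 := by
  intro h
  have h1 : a * p ^ k = 1 := (sub_eq_zero.mp h).symm
  have h2 : ‖a‖ * ‖p‖ ^ k = 1 := by rw [← norm_pow, ← norm_mul, h1, norm_one]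
  have h3 : ‖p‖ ^ k ≤ 1 := pow_le_one₀ (norm_nonneg _) hp.le
  nlinarith [norm_nonneg a, norm_nonneg p]

lemma Q_ne (a p : ℂ) (ha : ‖a‖ < 1) (hp : ‖p‖ < 1) : qPochInf a p ≠ 0 := by
  have := tprod_one_add_ne_zero_of_summable (f := fun k : ℕ => -(a * p ^ k))
    (fun k => by simpa [sub_eq_add_neg] using one_sub_ne a p ha hp k) (summable_geo a p hp)
  simpa [qPochInf, sub_eq_add_neg] using this

lemma Q_sq (a p : ℂ) (hp : ‖p‖ < 1) :
    qPochInf a p * qPochInf (-a) p = qPochInf (a ^ 2) (p ^ 2) := by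
  unfold qPochInf
  rw [← (mult_Q a p hp).tprod_mul (mult_Q (-a) p hp)]
  refine tprod_congr fun k => ?_
  ring

lemma norm_pow_lt (p : ℂ) (hp : ‖p‖ < 1) (m : ℕ) (hm : m ≠ 0) : ‖p ^ m‖ < 1 := by
  rw [norm_pow]; exact pow_lt_one₀ (norm_nonneg _) hp hm

lemma Q_two (a p : ℂ) (hp : ‖p‖ < 1) :
    qPochInf a p = qPochInf a (p ^ 2) * qPochInf (a * p) (p ^ 2) := by
  have hp2 := norm_pow_lt p hp 2 (by norm_num)
  have h1 := (tendsto_Q a _ hp2).mul (tendsto_Q (a * p) _ hp2)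
  have h2 : Filter.Tendsto (fun N : ℕ => 2 * N) Filter.atTop Filter.atTop :=
    Filter.tendsto_id.const_mul_atTop' (by norm_num)
  refine tendsto_nhds_unique ((tendsto_Q a p hp).comp h2) (h1.congr fun N => ?_)
  simp only [Function.comp]
  induction N with
  | zero => simp
  | succ N ih =>
    rw [show 2 * (N + 1) = 2 * N + 1 + 1 by ring, Finset.prod_range_succ, Finset.prod_range_succ,
      Finset.prod_range_succ, Finset.prod_range_succ, ← ih]
    ring

lemma Q_five (a p : ℂ) (hp : ‖p‖ < 1) :
    qPochInf a p = qPochInf a (p ^ 5) * qPochInf (a * p) (p ^ 5) * qPochInf (a * p ^ 2) (p ^ 5)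
      * qPochInf (a * p ^ 3) (p ^ 5) * qPochInf (a * p ^ 4) (p ^ 5) := by
  have hp2 := norm_pow_lt p hp 5 (by norm_num)
  have h1 := ((((tendsto_Q a _ hp2).mul (tendsto_Q (a * p) _ hp2)).mul
    (tendsto_Q (a * p ^ 2) _ hp2)).mul (tendsto_Q (a * p ^ 3) _ hp2)).mul
    (tendsto_Q (a * p ^ 4) _ hp2)
  have h2 : Filter.Tendsto (fun N : ℕ => 5 * N) Filter.atTop Filter.atTop :=
    Filter.tendsto_id.const_mul_atTop' (by norm_num)
  refine tendsto_nhds_unique ((tendsto_Q a p hp).comp h2) (h1.congr fun N => ?_)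
  simp only [Function.comp]
  induction N with
  | zero => simp
  | succ N ih =>
    rw [show 5 * (N + 1) = 5 * N + 1 + 1 + 1 + 1 + 1 by ring]
    simp only [Finset.prod_range_succ]
    rw [← ih]
    ring

/-- The theta term. -/
noncomputable def thT (a b : ℂ) (n : ℤ) : ℂ :=
  a ^ ((n * (n + 1)) / 2).toNat * b ^ ((n * (n - 1)) / 2).toNat

lemma tri_nonneg (n : ℤ) : 0 ≤ n * (n + 1) / 2 := by
  apply Int.ediv_nonneg _ (by norm_num)
  rcases le_or_gt 0 n with h | h
  · positivity
  · nlinarith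

lemma tri_nonneg' (n : ℤ) : 0 ≤ n * (n - 1) / 2 := by
  have := tri_nonneg (n - 1)
  rwa [show (n - 1) * (n - 1 + 1) = n * (n - 1) by ring] at this

lemma thT_zpow (a b : ℂ) (n : ℤ) :
    thT a b n = a ^ (n * (n + 1) / 2) * b ^ (n * (n - 1) / 2) := by
  unfold thT
  rw [← zpow_natCast, ← zpow_natCast, Int.toNat_of_nonneg (tri_nonneg n),
    Int.toNat_of_nonneg (tri_nonneg' n)]

lemma thT_succ (a b : ℂ) (ha : a ≠ 0) (hb : b ≠ 0) (n : ℤ) :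
    thT a b (n + 1) = thT a b n * (a * (a * b) ^ n) := by
  rw [thT_zpow, thT_zpow]
  have h1 : (n + 1) * (n + 1 + 1) / 2 = n * (n + 1) / 2 + (n + 1) := by
    rw [show (n + 1) * (n + 1 + 1) = n * (n + 1) + (n + 1) * 2 by ring,
      Int.add_mul_ediv_right _ _ (by norm_num)]
  have h2 : (n + 1) * (n + 1 - 1) / 2 = n * (n - 1) / 2 + n := by
    rw [show (n + 1) * (n + 1 - 1) = n * (n - 1) + n * 2 by ring,
      Int.add_mul_ediv_right _ _ (by norm_num)]
  rw [h1, h2, zpow_add₀ ha, zpow_add₀ hb, zpow_add₀ ha, mul_zpow, zpow_one]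
  ring

/-- finite product (p;p)_m -/
noncomputable def finP (p : ℂ) (m : ℕ) : ℂ := ∏ k ∈ Finset.range m, (1 - p * p ^ k)

/-- reciprocal of (p;p)_m, zero for negative m -/
noncomputable def rec_P (p : ℂ) (m : ℤ) : ℂ := if m < 0 then 0 else (finP p m.toNat)⁻¹

lemma finP_ne (p : ℂ) (hp : ‖p‖ < 1) (m : ℕ) : finP p m ≠ 0 :=
  Finset.prod_ne_zero_iff.mpr fun k _ => one_sub_ne p p hp hp k

lemma rec_P_pred (p : ℂ) (hp : ‖p‖ < 1) (m : ℤ) :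
    rec_P p (m - 1) = (1 - p ^ m) * rec_P p m := by
  unfold rec_P
  rcases lt_trichotomy m 0 with h | h | h
  · rw [if_pos (by omega), if_pos h, mul_zero]
  · subst h; simp
  · obtain ⟨k, rfl⟩ : ∃ k : ℕ, m = k + 1 := ⟨(m - 1).toNat, by omega⟩
    rw [if_neg (by omega), if_neg (by omega)]
    have e1 : ((k : ℤ) + 1 - 1).toNat = k := by omega
    have e2 : ((k : ℤ) + 1).toNat = k + 1 := by omega
    have e3 : p ^ ((k : ℤ) + 1) = p * p ^ k := by
      rw [show ((k : ℤ) + 1) = ((k + 1 : ℕ) : ℤ) by push_cast; rfl, zpow_natCast, pow_succ']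
    rw [e1, e2, e3, finP, finP, Finset.prod_range_succ, mul_inv]
    have := one_sub_ne p p hp hp k
    field_simp

lemma finite_jtp (a b : ℂ) (ha : a ≠ 0) (hb : b ≠ 0) (hp : ‖a * b‖ < 1) (N : ℕ) :
    HasSum (fun n : ℤ => finP (a * b) (2 * N) * rec_P (a * b) (N + n) * rec_P (a * b) (N - n)
        * thT a b n)
      (∏ k ∈ Finset.range N, ((1 + a * (a * b) ^ k) * (1 + b * (a * b) ^ k))) := by
  induction N with
  | zero =>
    have := hasSum_single (f := fun n : ℤ => finP (a * b) (2 * 0) * rec_P (a * b) ((0 : ℕ) + n)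
        * rec_P (a * b) ((0 : ℕ) - n) * thT a b n) 0 (by
      intro n hn
      rcases lt_or_gt_of_ne hn with h | h
      · simp [rec_P, h]
      · simp [rec_P, h])
    simpa [rec_P, finP, thT] using this
  | succ N ih =>
    set p := a * b with hpdef
    have hp0 : p ≠ 0 := mul_ne_zero ha hb
    have hs1 := (Equiv.addRight (-1 : ℤ)).hasSum_iff.mpr ih
    have hs2 := (Equiv.addRight (1 : ℤ)).hasSum_iff.mpr ih
    have h := ((ih.mul_left (1 + p * (p ^ N) ^ 2)).add (hs1.mul_left (a * p ^ N))).add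
      (hs2.mul_left (b * p ^ N))
    rw [Finset.prod_range_succ]
    have hval : (∏ k ∈ Finset.range N, (1 + a * p ^ k) * (1 + b * p ^ k))
        * ((1 + a * p ^ N) * (1 + b * p ^ N))
        = (1 + p * (p ^ N) ^ 2) * ∏ k ∈ Finset.range N, (1 + a * p ^ k) * (1 + b * p ^ k) +
        a * p ^ N * ∏ k ∈ Finset.range N, (1 + a * p ^ k) * (1 + b * p ^ k) +
        b * p ^ N * ∏ k ∈ Finset.range N, (1 + a * p ^ k) * (1 + b * p ^ k) := by
      generalize (∏ k ∈ Finset.range N, (1 + a * p ^ k) * (1 + b * p ^ k)) = Z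
      generalize p ^ N = y
      rw [hpdef]; ring
    rw [hval]
    have hfun : ∀ {f g : ℤ → ℂ} {s : ℂ}, HasSum f s → (∀ n, g n = f n) → HasSum g s :=
      fun hf hg => (funext hg : _ = _) ▸ hf
    refine hfun h ?_
    · intro n
      simp only [Function.comp, Equiv.coe_addRight]
      have t2 : thT a b (n + 1) = thT a b n * (a * p ^ n) := thT_succ a b ha hb n
      have t1 : thT a b n = thT a b (n + -1) * (a * p ^ (n + -1)) := by
        have := thT_succ a b ha hb (n + -1)
        rwa [show n + -1 + 1 = n by ring] at this
      have t3 : a * p ^ N * thT a b (n + -1) = p ^ N * p * (p ^ n)⁻¹ * thT a b n := by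
        rw [t1, zpow_add₀ hp0, zpow_neg_one]
        have := zpow_ne_zero n hp0
        field_simp
      have r1 := rec_P_pred p hp (N + 1 + n)
      have r2 := rec_P_pred p hp (N + n)
      have r3 := rec_P_pred p hp (N + 1 - n)
      have r4 := rec_P_pred p hp (N - n)
      rw [show (N : ℤ) + 1 + n - 1 = N + n by ring] at r1
      rw [show (N : ℤ) + 1 - n - 1 = N - n by ring] at r3
      have f1 : finP p (2 * (N + 1))
          = finP p (2 * N) * (1 - p * (p ^ N) ^ 2) * (1 - p * p * (p ^ N) ^ 2) := by
        unfold finP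
        rw [show 2 * (N + 1) = 2 * N + 1 + 1 by ring, Finset.prod_range_succ,
          Finset.prod_range_succ]
        ring
      have x1 : p ^ ((N : ℤ) + 1 + n) = p ^ N * p * p ^ n := by
        rw [zpow_add₀ hp0, zpow_add₀ hp0, zpow_natCast, zpow_one]
      have x2 : p ^ ((N : ℤ) + n) = p ^ N * p ^ n := by
        rw [zpow_add₀ hp0, zpow_natCast]
      have x3 : p ^ ((N : ℤ) + 1 - n) = p ^ N * p * (p ^ n)⁻¹ := by
        rw [zpow_sub₀ hp0, zpow_add₀ hp0, zpow_natCast, zpow_one]; rfl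
      have x4 : p ^ ((N : ℤ) - n) = p ^ N * (p ^ n)⁻¹ := by
        rw [zpow_sub₀ hp0, zpow_natCast]; rfl
      have hy : p ^ n ≠ 0 := zpow_ne_zero n hp0
      rw [x1] at r1
      rw [x2] at r2
      rw [x3] at r3
      rw [x4] at r4
      have e1 : (N : ℤ) + (n + -1) = N + n - 1 := by ring
      have e2 : (N : ℤ) - (n + -1) = N + 1 - n := by ring
      have e3 : (N : ℤ) + (n + 1) = N + 1 + n := by ring
      have e4 : (N : ℤ) - (n + 1) = N - n - 1 := by ring
      push_cast
      rw [e1, e2, e3, e4, r2, r4, r1, r3, f1, t2]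
      have lhs2 : ∀ X : ℂ, a * p ^ N * (X * thT a b (n + -1))
          = X * (p ^ N * p * (p ^ n)⁻¹ * thT a b n) := by
        intro X; rw [← t3]; ring
      rw [lhs2]
      have lhs3 : ∀ X : ℂ, b * p ^ N * (X * (thT a b n * (a * p ^ n)))
          = X * (p ^ N * p * p ^ n * thT a b n) := by
        intro X; rw [hpdef]; ring
      rw [lhs3]
      generalize p ^ n = y at *
      field_simp
      ring

lemma thT_norm_le (a b : ℂ) (ha : ‖a‖ < 1) (hb : ‖b‖ < 1) (n : ℕ) :
    ‖thT a b n‖ ≤ ‖a‖ ^ n ∧ ‖thT a b (-n)‖ ≤ ‖b‖ ^ n := by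
  have h1 : ∀ c : ℂ, ‖c‖ < 1 → ∀ k : ℕ, ‖c‖ ^ k ≤ 1 := fun c hc k =>
    pow_le_one₀ (norm_nonneg _) hc.le
  have key : (n : ℤ) ≤ (n : ℤ) * (n + 1) / 2 := by
    rw [Int.le_ediv_iff_mul_le (by norm_num)]
    rcases Nat.eq_zero_or_pos n with h | h
    · subst h; simp
    · have : (1 : ℤ) ≤ n := by exact_mod_cast h
      nlinarith
  have key2 : n ≤ ((n : ℤ) * (n + 1) / 2).toNat := by omega
  constructor
  · rw [thT, norm_mul, norm_pow, norm_pow]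
    calc _ ≤ ‖a‖ ^ ((n : ℤ) * (n + 1) / 2).toNat * 1 := by
            gcongr; exact h1 b hb _
      _ ≤ _ := by rw [mul_one]; exact pow_le_pow_of_le_one (norm_nonneg _) ha.le key2
  · rw [thT, norm_mul, norm_pow, norm_pow, show (-(n : ℤ)) * (-n - 1) = n * (n + 1) by ring]
    calc _ ≤ 1 * ‖b‖ ^ ((n : ℤ) * (n + 1) / 2).toNat := by
            gcongr; exact h1 a ha _
      _ ≤ _ := by rw [one_mul]; exact pow_le_pow_of_le_one (norm_nonneg _) hb.le key2

lemma thT_summable (a b : ℂ) (ha : ‖a‖ < 1) (hb : ‖b‖ < 1) :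
    Summable fun n : ℤ => ‖thT a b n‖ := by
  apply Summable.of_nat_of_neg
  · exact Summable.of_nonneg_of_le (fun _ => norm_nonneg _)
      (fun n => (thT_norm_le a b ha hb n).1) (summable_geometric_of_lt_one (norm_nonneg _) ha)
  · exact Summable.of_nonneg_of_le (fun _ => norm_nonneg _)
      (fun n => (thT_norm_le a b ha hb n).2) (summable_geometric_of_lt_one (norm_nonneg _) hb)

lemma jtp (a b : ℂ) (ha0 : a ≠ 0) (hb0 : b ≠ 0) (ha : ‖a‖ < 1) (hb : ‖b‖ < 1) :
    ramTheta a b = qPochInf (-a) (a * b) * qPochInf (-b) (a * b) * qPochInf (a * b) (a * b) := by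
  have hp : ‖a * b‖ < 1 := by
    rw [norm_mul]; nlinarith [norm_nonneg a, norm_nonneg b]
  set p := a * b with hpdef
  have hE : qPochInf p p ≠ 0 := Q_ne p p hp hp
  have tP : Filter.Tendsto (finP p) Filter.atTop (nhds (qPochInf p p)) := tendsto_Q p p hp
  have tPi : Filter.Tendsto (fun m => (finP p m)⁻¹) Filter.atTop (nhds (qPochInf p p)⁻¹) :=
    tP.inv₀ hE
  obtain ⟨C, hC⟩ := tP.norm.bddAbove_range
  obtain ⟨D, hD⟩ := tPi.norm.bddAbove_range
  have hC' : ∀ m, ‖finP p m‖ ≤ C := fun m => hC ⟨m, rfl⟩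
  have hD' : ∀ m, ‖(finP p m)⁻¹‖ ≤ D := fun m => hD ⟨m, rfl⟩
  have hC0 : 0 ≤ C := (norm_nonneg _).trans (hC' 0)
  have hD0 : 0 ≤ D := (norm_nonneg _).trans (hD' 0)
  have hR : ∀ m, ‖rec_P p m‖ ≤ D := by
    intro m
    unfold rec_P
    split_ifs
    · simpa using hD0
    · exact hD' _
  have tR : Filter.Tendsto (rec_P p) Filter.atTop (nhds (qPochInf p p)⁻¹) := by
    have h0 : Filter.Tendsto (fun m : ℤ => m.toNat) Filter.atTop Filter.atTop :=
      Filter.tendsto_atTop.mpr fun k => by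
        filter_upwards [Filter.eventually_ge_atTop (k : ℤ)] with m hm
        omega
    refine (tPi.comp h0).congr' ?_
    filter_upwards [Filter.eventually_ge_atTop (0 : ℤ)] with m hm
    simp [rec_P, not_lt.mpr hm]
  have lim1 : Filter.Tendsto (fun N : ℕ => ∑' n : ℤ, finP p (2 * N) * rec_P p (N + n)
      * rec_P p (N - n) * thT a b n) Filter.atTop
      (nhds (∑' n : ℤ, (qPochInf p p)⁻¹ * thT a b n)) := by
    refine tendsto_tsum_of_dominated_convergence (bound := fun n => C * D * D * ‖thT a b n‖)
      ((thT_summable a b ha hb).mul_left _) ?_ ?_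
    · intro n
      have h2 : Filter.Tendsto (fun N : ℕ => 2 * N) Filter.atTop Filter.atTop :=
        Filter.tendsto_id.const_mul_atTop' (by norm_num)
      have h3 : Filter.Tendsto (fun N : ℕ => (N : ℤ) + n) Filter.atTop Filter.atTop :=
        Filter.tendsto_atTop_add_const_right _ _ tendsto_natCast_atTop_atTop
      have h4 : Filter.Tendsto (fun N : ℕ => (N : ℤ) - n) Filter.atTop Filter.atTop :=
        Filter.tendsto_atTop_add_const_right _ (-n) tendsto_natCast_atTop_atTop
      have := (((tP.comp h2).mul (tR.comp h3)).mul (tR.comp h4)).mul_const (thT a b n)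
      rw [mul_inv_cancel₀ hE, one_mul] at this
      exact this
    · refine Filter.Eventually.of_forall fun N n => ?_
      rw [norm_mul, norm_mul, norm_mul]
      gcongr
      · exact hC' _
      · exact hR _
      · exact hR _
  have lim2 := (tendsto_Q (-a) p hp).mul (tendsto_Q (-b) p hp)
  have key := tendsto_nhds_unique lim1 (lim2.congr fun N => by
    rw [(finite_jtp a b ha0 hb0 hp N).tsum_eq, ← Finset.prod_mul_distrib]
    refine Finset.prod_congr rfl fun k _ => ?_
    rw [← hpdef]; ring)
  rw [tsum_mul_left] at key
  rw [← key, show ramTheta a b = ∑' n : ℤ, thT a b n from rfl]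
  field_simp

theorem stmt11 (q : ℝ) (hq0 : 0 < q) (hq1 : q < 1) :
    Omega1 q * Omega2 q
      = (q : ℂ) * phi (-(q : ℂ) ^ 10) * psi (-(q : ℂ))
        / (phi (-(q : ℂ)) * psi ((q : ℂ) ^ 5)) := by
  unfold Omega1 Omega2 phi psi
  have hx0 : (q : ℂ) ≠ 0 := by exact_mod_cast hq0.ne'
  have hx : ‖(q : ℂ)‖ < 1 := by simpa [abs_of_pos hq0] using hq1
  generalize (q : ℂ) = x at *
  have hn : ∀ m : ℕ, m ≠ 0 → ‖x ^ m‖ < 1 := norm_pow_lt x hx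
  have hn' : ∀ m : ℕ, m ≠ 0 → ‖-x ^ m‖ < 1 := fun m hm => by rw [norm_neg]; exact hn m hm
  have h0 : ∀ m : ℕ, x ^ m ≠ 0 := fun m => pow_ne_zero m hx0
  have h0' : ∀ m : ℕ, -x ^ m ≠ 0 := fun m => neg_ne_zero.mpr (h0 m)
  have J1 := jtp (x ^ 4) (x ^ 6) (h0 _) (h0 _) (hn _ (by norm_num)) (hn _ (by norm_num))
  have J2 := jtp (x ^ 2) (x ^ 8) (h0 _) (h0 _) (hn _ (by norm_num)) (hn _ (by norm_num))
  have J3 := jtp (-x ^ 1) (-x ^ 9) (h0' _) (h0' _) (hn' _ (by norm_num)) (hn' _ (by norm_num))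
  have J4 := jtp (-x ^ 3) (-x ^ 7) (h0' _) (h0' _) (hn' _ (by norm_num)) (hn' _ (by norm_num))
  have J5 := jtp (-x ^ 10) (-x ^ 10) (h0' _) (h0' _) (hn' _ (by norm_num)) (hn' _ (by norm_num))
  have J6 := jtp (-x ^ 1) (-x ^ 3) (h0' _) (h0' _) (hn' _ (by norm_num)) (hn' _ (by norm_num))
  have J7 := jtp (-x ^ 1) (-x ^ 1) (h0' _) (h0' _) (hn' _ (by norm_num)) (hn' _ (by norm_num))
  have J8 := jtp (x ^ 5) (x ^ 15) (h0 _) (h0 _) (hn _ (by norm_num)) (hn _ (by norm_num))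
  simp only [neg_mul_neg, neg_neg, ← pow_add, Nat.reduceAdd] at J1 J2 J3 J4 J5 J6 J7 J8
  rw [show (-x) ^ 3 = -x ^ 3 by ring, show (x ^ 5) ^ 3 = x ^ 15 by ring]
  rw [pow_one] at J3 J6 J7
  rw [J1, J2, J3, J4, J5, J6, J7, J8]
  have D1 := Q_five (-x ^ 2) (x ^ 2) (hn _ (by norm_num))
  have D2 := Q_five x (x ^ 2) (hn _ (by norm_num))
  have D3 := Q_two x (x ^ 2) (hn _ (by norm_num))
  have D4 := Q_two (-x ^ 5) (x ^ 10) (hn _ (by norm_num))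
  have D5 := Q_two (x ^ 10) (x ^ 10) (hn _ (by norm_num))
  have S1 := Q_sq (x ^ 2) (x ^ 2) (hn _ (by norm_num))
  have S2 := Q_sq (x ^ 10) (x ^ 10) (hn _ (by norm_num))
  have S3 := Q_sq (x ^ 5) (x ^ 10) (hn _ (by norm_num))
  simp only [← pow_mul, ← pow_add, ← pow_succ', neg_mul, Nat.reduceAdd, Nat.reduceMul]
    at D1 D2 D3 D4 D5 S1 S2 S3
  have hx' : ‖x ^ 1‖ < 1 := hn 1 (by norm_num)
  have nQ : ∀ m k : ℕ, m ≠ 0 → k ≠ 0 → qPochInf (x ^ m) (x ^ k) ≠ 0 := fun m k hm hk =>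
    Q_ne _ _ (hn m hm) (hn k hk)
  have nQ' : ∀ m k : ℕ, m ≠ 0 → k ≠ 0 → qPochInf (-x ^ m) (x ^ k) ≠ 0 := fun m k hm hk =>
    Q_ne _ _ (hn' m hm) (hn k hk)
  have nx : ∀ k : ℕ, k ≠ 0 → qPochInf x (x ^ k) ≠ 0 := fun k hk => Q_ne _ _ hx (hn k hk)
  have n1 := nx 10 (by norm_num)
  have n2 := nQ 9 10 (by norm_num) (by norm_num)
  have n3 := nQ 10 10 (by norm_num) (by norm_num)
  have n4 := nQ 3 10 (by norm_num) (by norm_num)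
  have n5 := nQ 7 10 (by norm_num) (by norm_num)
  have n6 := nQ 5 10 (by norm_num) (by norm_num)
  have n7 := nx 2 (by norm_num)
  have n8 := nQ 2 2 (by norm_num) (by norm_num)
  have n9 := nQ 20 20 (by norm_num) (by norm_num)
  have n10 := nQ' 5 10 (by norm_num) (by norm_num)
  have n11 := nQ 10 20 (by norm_num) (by norm_num)
  rw [← S2] at D5
  have UY : qPochInf (x ^ 10) (x ^ 20) * qPochInf (-x ^ 10) (x ^ 10) = 1 := by
    apply mul_left_cancel₀ n3
    linear_combination -D5
  rw [← D3, ← D4, ← S1, D1]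
  have goal_aux : ∀ X4 X6 X2 X8 E10 Z1 Z9 Z3 Z7 U E20 W E2 S V Y : ℂ, E10 ≠ 0 → Z1 ≠ 0 → Z9 ≠ 0 →
      Z3 ≠ 0 → Z7 ≠ 0 → E20 ≠ 0 → W ≠ 0 → E2 ≠ 0 → S ≠ 0 → V ≠ 0 → U * Y = 1 → V * S = U →
      W = Z1 * Z3 * V * Z7 * Z9 →
      X4 * X6 * E10 / (Z1 * Z9 * E10) * (x * (X2 * X8 * E10) / (Z3 * Z7 * E10))
        = x * (U * U * E20) * (W * (E2 * (X2 * X4 * X6 * X8 * Y)))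
          / (W * W * E2 * (S * E20)) := by
    intro X4 X6 X2 X8 E10 Z1 Z9 Z3 Z7 U E20 W E2 S V Y a1 a2 a3 a4 a5 a6 a7 a8 a9 a10 hUY hVS hW
    have e1 : x * (U * U * E20) * (W * (E2 * (X2 * X4 * X6 * X8 * Y)))
          / (W * W * E2 * (S * E20)) = x * X2 * X4 * X6 * X8 * U * (U * Y) / (W * S) := by
      field_simp
    rw [e1, hUY, ← hVS, hW]
    field_simp
  exact goal_aux _ _ _ _ _ _ _ _ _ _ _ _ _ _ _ _ n3 n1 n2 n4 n5 n9 n7 n8 n10 n6 UY S3 D2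
end
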